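/- arXiv:1203.6812 — 3 statements merged into one kernel-verified Lean document; each statement's English description precedes it below -/
import Mathlib

section
/- Let n ≥ 3 and ℓ > 0. Let J be an n×n real symmetric diagonally dominant matrix all of whose entries satisfy J_{ij} ≥ ℓ. Then J is invertible and ‖J⁻¹‖∞ ≤ (3n−4)/(2ℓ(n−2)(n−1)). Moreover, equality holds if and only if J = ℓS. -/
/-!
Write `M = 2(n-2)(n-1)/(3n-4)`, so that the bound is `1/(ℓM)`. It has to be shown that
`‖Jx‖∞ ≥ ℓM` whenever `‖x‖∞ = 1`, and that equality forces `J = ℓS`; replacing `x` by `-x`, some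
coordinate `x i₀` equals `1`.

Put `K = J - ℓS`, a symmetric diagonally dominant matrix with nonnegative entries. For any `z` whose
coordinates satisfy `z i * x i ≥ 0` and `(z i + z j) * (x i + x j) ≥ 0`, the identity
`2 zᵀKx = ∑ K i j (z i + z j) (x i + x j) - 2 ∑ z i x i (∑ j, K i j)` gives `zᵀKx ≥ 0`,
since `∑ j, K i j ≤ 2 K i i` (`bilin_nonneg`). Hence `ℓ zᵀSx ≤ zᵀJx ≤ ‖z‖₁ ‖Jx‖∞`, and a `z` with `zᵀSx > M ‖z‖₁` yields
`‖Jx‖∞ > ℓM`. Two test vectors are enough: the unit vector at `i₀`, and the truncated sign vector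
`thr t ∘ x` (`+1` where `x i ≥ t`, `-1` where `x i ≤ -t`, and `0` elsewhere), with `t` the
level at which including a negative coordinate becomes profitable. If both fail, then
`x i = -n/(3n-4)` for all `i ≠ i₀` (`extremal_of_tests`). For that vector `Sx = M(1,-1,…,-1)`, and
comparing `Jx` with `ℓSx` row by row shows `K = 0` (`residual_eq_zero`).

Applying this to the normalisation of `J⁻¹ y`, with `y` the sign vector of a row of `J⁻¹` of maximal
absolute sum, gives the theorem.
-/

open Matrix

/-- The maximum absolute row sum norm of a matrix. -/
noncomputable def infNorm {n : ℕ} (A : Matrix (Fin n) (Fin n) ℝ) : ℝ :=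
  ⨆ i, ∑ j, |A i j|

/-- The truncated sign function at level `t`; at level `t = 0` the value at `0` is `1`. -/
noncomputable def thr (t a : ℝ) : ℝ := if t ≤ a then 1 else if a ≤ -t then -1 else 0

lemma thr_mul_self_nonneg {t : ℝ} (ht : 0 ≤ t) (a : ℝ) : 0 ≤ thr t a * a := by
  unfold thr; split_ifs <;> linarith

lemma thr_add_mul_nonneg {t : ℝ} (ht : 0 ≤ t) (a b : ℝ) :
    0 ≤ (thr t a + thr t b) * (a + b) := by
  unfold thr; split_ifs <;> linarith

/-- A monotone odd `φ` makes `z = φ ∘ x` satisfy the sign conditions, so that `zᵀJx` can only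
decrease when `J` is replaced by `ℓS`. -/
lemma bilin_nonneg {n : ℕ} (K : Matrix (Fin n) (Fin n) ℝ) (hsym : ∀ i j, K i j = K j i)
    (hoff : ∀ i j, i ≠ j → 0 ≤ K i j)
    (hdd : ∀ i, ∑ j ∈ Finset.univ.erase i, K i j ≤ K i i)
    (z x : Fin n → ℝ) (h1 : ∀ i, 0 ≤ z i * x i)
    (h2 : ∀ i j, 0 ≤ (z i + z j) * (x i + x j)) :
    0 ≤ ∑ i, z i * ∑ j, K i j * x j := by
  have key : ∑ i, ∑ j, K i j * ((z i + z j) * (x i + x j)) =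
      2 * (∑ i, z i * ∑ j, K i j * x j) + 2 * ∑ i, (z i * x i) * ∑ j, K i j := by
    have e1 : ∑ i, ∑ j, K i j * (z j * x i) = ∑ i, z i * ∑ j, K i j * x j := by
      rw [Finset.sum_comm]
      refine Finset.sum_congr rfl fun i _ => ?_
      rw [Finset.mul_sum]
      exact Finset.sum_congr rfl fun j _ => by rw [hsym j i]; ring
    have e2 : ∑ i, ∑ j, K i j * (z j * x j) = ∑ i, (z i * x i) * ∑ j, K i j := by
      rw [Finset.sum_comm]
      refine Finset.sum_congr rfl fun i _ => ?_
      rw [Finset.mul_sum]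
      exact Finset.sum_congr rfl fun j _ => by rw [hsym j i]; ring
    rw [two_mul, two_mul]
    nth_rewrite 1 [← e1]
    nth_rewrite 1 [← e2]
    simp only [← Finset.sum_add_distrib, Finset.mul_sum]
    exact Finset.sum_congr rfl fun i _ => Finset.sum_congr rfl fun j _ => by ring
  have hrow : ∀ i, 2 * ((z i * x i) * ∑ j, K i j) ≤
      ∑ j, K i j * ((z i + z j) * (x i + x j)) := by
    intro i
    rw [← Finset.add_sum_erase _ _ (Finset.mem_univ i),
      ← Finset.add_sum_erase _ _ (Finset.mem_univ i)]
    have hn : 0 ≤ ∑ j ∈ Finset.univ.erase i, K i j * ((z i + z j) * (x i + x j)) :=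
      Finset.sum_nonneg fun j hj =>
        mul_nonneg (hoff i j (Finset.ne_of_mem_erase hj).symm) (h2 i j)
    nlinarith [mul_le_mul_of_nonneg_left (hdd i) (h1 i)]
  have := Finset.sum_le_sum fun i (_ : i ∈ Finset.univ) => hrow i
  rw [key, ← Finset.mul_sum] at this
  linarith

/-- Let `‖x‖∞ = x i₀ = 1`. If neither the unit vector at `i₀` (hypothesis `h1`) nor the truncated
sign vector of `x` at the level `(M + ∑ x)/(n-2)`, replaced by `0` if negative (hypothesis `h2`), is
a test vector `z` with `zᵀSx > M ‖z‖₁`, then `x` is the extremal vector. -/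
lemma extremal_of_tests {n : ℕ} (hn : 3 ≤ n) (M : ℝ)
    (hM : M * (3 * (n : ℝ) - 4) = 2 * ((n : ℝ) - 2) * ((n : ℝ) - 1))
    (x : Fin n → ℝ) (i₀ : Fin n) (hi₀ : x i₀ = 1) (hx : ∀ i, |x i| ≤ 1) (s t : ℝ)
    (hs : s = ∑ i, x i) (ht : t = max ((M + s) / ((n : ℝ) - 2)) 0)
    (h1 : (n : ℝ) - 2 + s ≤ M)
    (h2 : ∑ i, (thr t (x i) * (((n : ℝ) - 2) * x i + s) - M * |thr t (x i)|) ≤ 0) :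
    ∀ i, i ≠ i₀ → x i = -((n : ℝ) / (3 * n - 4)) := by
  have hn' : (3 : ℝ) ≤ n := by exact_mod_cast hn
  set N : ℝ := (n : ℝ) with hN
  have hd : 0 < 3 * N - 4 := by linarith
  have hn2 : 0 < N - 2 := by linarith
  have hMpos : 0 < M := by
    by_contra h
    nlinarith [mul_pos hn2 (show 0 < N - 1 by linarith)]
  have hMlt : M < N - 2 := by
    by_contra h
    nlinarith [mul_pos hn2 hn2]
  set τ : ℝ := (M + s) / (N - 2) with hτ
  have hτmul : (N - 2) * τ = M + s := by rw [hτ]; exact mul_div_cancel₀ _ hn2.ne'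
  have htτ : τ ≤ t := ht ▸ le_max_left _ _
  have ht0 : 0 ≤ t := ht ▸ le_max_right _ _
  have ht1 : t ≤ 1 := by
    rw [ht]; refine max_le ?_ zero_le_one
    nlinarith
  set A : Finset (Fin n) := Finset.univ.filter fun i => t ≤ x i with hA
  have hmemA : i₀ ∈ A := by simp [hA, hi₀, ht1]
  have hsplit : ∀ f : Fin n → ℝ, ∑ i, f i = ∑ i ∈ A, f i + ∑ i ∈ Aᶜ, f i := fun f =>
    (Finset.sum_add_sum_compl A f).symm
  set m : ℝ := (A.card : ℝ) with hm
  have hcc : ((Aᶜ.card : ℕ) : ℝ) = N - m := by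
    have := Finset.card_add_card_compl A
    rw [Fintype.card_fin] at this
    have h : m + (Aᶜ.card : ℝ) = N := by rw [hN, hm]; exact_mod_cast this
    linarith
  have hm1 : 1 ≤ m := by
    rw [hm]; exact_mod_cast Finset.card_pos.mpr ⟨i₀, hmemA⟩
  set X : ℝ := ∑ i ∈ A, x i with hX
  have hXc : ∑ i ∈ Aᶜ, x i = s - X := by rw [hs, hsplit x]; ring
  have hXlow : 1 + (m - 1) * t ≤ X := by
    rw [hX, ← Finset.add_sum_erase _ _ hmemA, hi₀]
    have := Finset.card_nsmul_le_sum (A.erase i₀) x t fun i hi => by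
      have := Finset.mem_of_mem_erase hi
      simpa [hA] using this
    rw [Finset.card_erase_of_mem hmemA, nsmul_eq_mul,
      Nat.cast_sub (Finset.card_pos.mpr ⟨i₀, hmemA⟩)] at this
    push_cast at this
    linarith
  have hXlow' : (N - 2) + (m - 1) * (M + s) ≤ (N - 2) * X := by
    have a := mul_le_mul_of_nonneg_left htτ (show 0 ≤ m - 1 by linarith)
    have b := mul_le_mul_of_nonneg_left (le_trans (add_le_add_right a 1) hXlow) hn2.le
    have : (N - 2) * (1 + (m - 1) * τ) = (N - 2) + (m - 1) * (M + s) := by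
      rw [← hτmul]; ring
    linarith
  -- Coordinates outside `A` are at least `-1`.
  have hup : X - s ≤ N - m := by
    have := Finset.card_nsmul_le_sum Aᶜ x (-1) fun i _ => (abs_le.mp (hx i)).1
    rw [nsmul_eq_mul, hcc, hXc] at this
    linarith
  have hcardgap : 0 < N - 1 - m := by
    have hX1 : 1 ≤ X := by nlinarith [mul_nonneg (show 0 ≤ m - 1 by linarith) ht0]
    have h3 : 1 < N - m := by linarith
    rw [← hcc] at h3
    have h4 : 2 ≤ Aᶜ.card := by exact_mod_cast h3
    have h5 : (2 : ℝ) ≤ Aᶜ.card := by exact_mod_cast h4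
    linarith
  -- The upper bound on `-s` from `hup` and `hXlow'` meets the lower bound `h1` only if at most half
  -- of the coordinates lie in `A`.
  have h2m : 2 * m ≤ N := by
    have a : (N - 2) * (X - s) ≤ (N - 2) * (N - m) := mul_le_mul_of_nonneg_left hup hn2.le
    have b := mul_le_mul_of_nonneg_left h1 hcardgap.le
    by_contra h
    have c : 0 < (2 * m - N) * M := mul_pos (by linarith) hMpos
    nlinarith
  set g : Fin n → ℝ := fun i => thr t (x i) * ((N - 2) * x i + s) - M * |thr t (x i)| with hg
  have hgA : ∀ i ∈ A, g i = (N - 2) * x i + (s - M) := by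
    intro i hi
    have : t ≤ x i := by simpa [hA] using hi
    simp only [hg, thr, if_pos this]; norm_num; ring
  have hgAsum : ∑ i ∈ A, g i = (N - 2) * X + m * (s - M) := by
    rw [Finset.sum_congr rfl hgA, Finset.sum_add_distrib, ← Finset.mul_sum, Finset.sum_const,
      nsmul_eq_mul]
  -- Each coordinate outside `A` contributes at least `-(N - 2) * (x i + τ)`: equality holds where
  -- `x i ≤ -t`, and the contribution `0` is larger elsewhere.
  have hgc : ∀ i ∈ Aᶜ, 0 ≤ g i + ((N - 2) * x i + (M + s)) ∧
      (-t < x i → g i = 0) := by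
    intro i hi
    have h : ¬ t ≤ x i := by simpa [hA] using hi
    simp only [hg, thr, if_neg h]
    split_ifs with h'
    · refine ⟨le_of_eq ?_, fun h'' => absurd h' (not_le.mpr h'')⟩
      norm_num; ring
    · refine ⟨?_, fun _ => by simp⟩
      -- The level is positive here, so it is not truncated.
      have : t = τ := by
        rcases max_choice τ 0 with h3 | h3
        · rw [ht, h3]
        · rw [h3] at ht; exfalso; rw [ht] at h h'; simp at h h'; linarith
      rw [← hτmul]
      have : 0 ≤ (N - 2) * (x i + τ) := mul_nonneg hn2.le (by linarith)
      simp; linarith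
  have hgcsum : ∑ i ∈ Aᶜ, (g i + ((N - 2) * x i + (M + s))) =
      ∑ i ∈ Aᶜ, g i + ((N - 2) * (s - X) + (N - m) * (M + s)) := by
    rw [Finset.sum_add_distrib, Finset.sum_add_distrib, ← Finset.mul_sum, hXc, Finset.sum_const,
      nsmul_eq_mul, hcc]
  have hgcnn := Finset.sum_nonneg fun i hi => (hgc i hi).1
  have htot : ∑ i ∈ A, g i + ∑ i ∈ Aᶜ, g i ≤ 0 := by rw [← hsplit g]; exact h2
  have hid : (3 * N - 4) * (2 * (N - 2) + (2 * m - 2 - N) * M + 2 * (N - 2 * m) * (N - 2 - M)) =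
      4 * (N - 2) * (m - 1) := by
    linear_combination (6 * m - 2 - 3 * N) * hM
  have hslack : 0 ≤ (N - 2 * m) * (M - (N - 2 + s)) :=
    mul_nonneg (by linarith) (by linarith)
  -- The objective of `h2` is bounded below by a sum of three nonnegative terms, so all vanish.
  have hlow : 2 * (N - 2) + (2 * m - 2 - N) * M + 2 * (N - 2 * m) * (N - 2 - M) +
      2 * ((N - 2 * m) * (M - (N - 2 + s))) +
      ∑ i ∈ Aᶜ, (g i + ((N - 2) * x i + (M + s))) ≤ 0 := by
    rw [hgcsum]; rw [hgAsum] at htot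
    linarith
  have hconst : 0 ≤ 2 * (N - 2) + (2 * m - 2 - N) * M + 2 * (N - 2 * m) * (N - 2 - M) := by
    refine nonneg_of_mul_nonneg_right ?_ hd
    rw [hid]; exact mul_nonneg (by linarith) (by linarith)
  have hm_eq : m = 1 := by
    have h0 : 2 * (N - 2) + (2 * m - 2 - N) * M + 2 * (N - 2 * m) * (N - 2 - M) = 0 := by
      linarith
    rw [h0, mul_zero] at hid
    rcases mul_eq_zero.mp hid.symm with h | h <;> linarith
  have hs_eq : N - 2 + s = M := by
    have h0 : (N - 2 * m) * (M - (N - 2 + s)) = 0 := by linarith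
    rw [hm_eq] at h0
    rcases mul_eq_zero.mp h0 with h | h <;> linarith
  have hzero : ∀ i ∈ Aᶜ, g i + ((N - 2) * x i + (M + s)) = 0 :=
    (Finset.sum_eq_zero_iff_of_nonneg fun i hi => (hgc i hi).1).mp (by linarith)
  have hτ_eq : τ = N / (3 * N - 4) := by
    rw [eq_div_iff hd.ne']
    have : (N - 2) * (τ * (3 * N - 4) - N) = 0 := by
      linear_combination (3 * N - 4) * hτmul + 2 * hM + (3 * N - 4) * hs_eq
    rcases mul_eq_zero.mp this with h | h <;> linarith
  have hτpos : 0 < τ := by rw [hτ_eq]; exact div_pos (by linarith) hd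
  have ht_eq : t = τ := by rw [ht]; exact max_eq_left hτpos.le
  have hle : ∀ i ∈ Aᶜ, x i ≤ -τ := by
    intro i hi
    by_contra h
    have e := hzero i hi
    rw [(hgc i hi).2 (by rw [ht_eq]; linarith), ← hτmul] at e
    have : 0 < (N - 2) * (x i + τ) := mul_pos hn2 (by linarith)
    linarith
  have hAeq : A = {i₀} := by
    have : A.card = 1 := by rw [hm] at hm_eq; exact_mod_cast hm_eq
    obtain ⟨a, ha⟩ := Finset.card_eq_one.mp this
    rw [ha] at hmemA ⊢
    rw [Finset.mem_singleton.mp hmemA]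
  have hX1 : X = 1 := by rw [hX, hAeq]; simp [hi₀]
  have hsum0 : ∑ i ∈ Aᶜ, (-τ - x i) = 0 := by
    rw [Finset.sum_sub_distrib, hXc, Finset.sum_const, nsmul_eq_mul, hcc, hm_eq, hX1]
    have e : (N - 2) * τ = M + s := hτmul
    have e' : τ * (3 * N - 4) = N := by rw [hτ_eq]; exact div_mul_cancel₀ _ hd.ne'
    have : (3 * N - 4) * ((N - 1) * -τ - (s - 1)) = 0 := by
      linear_combination (-(N - 1)) * e' - (3 * N - 4) * hs_eq - hM
    rcases mul_eq_zero.mp this with h | h <;> linarith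
  intro i hi
  have hiA : i ∈ Aᶜ := by simp [hAeq, hi]
  have := (Finset.sum_eq_zero_iff_of_nonneg fun i hi => by linarith [hle i hi]).mp hsum0 i hiA
  rw [← hτ_eq]; linarith

/-- A nonnegative symmetric diagonally dominant matrix `K` that does not enlarge any coordinate of
`Sx = M(1,-1,…,-1)`, where `x = (1,-r,…,-r)`, vanishes. -/
lemma residual_eq_zero {n : ℕ} (K : Matrix (Fin n) (Fin n) ℝ) (hsym : ∀ i j, K i j = K j i)
    (hoff : ∀ i j, i ≠ j → 0 ≤ K i j)
    (hdd : ∀ i, ∑ j ∈ Finset.univ.erase i, K i j ≤ K i i)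
    (x : Fin n → ℝ) (i₀ : Fin n) (hi₀ : x i₀ = 1) (r : ℝ) (hr0 : 0 < r) (hr1 : r < 1)
    (hx : ∀ i, i ≠ i₀ → x i = -r)
    (h1 : ∑ j, K i₀ j * x j ≤ 0)
    (h2 : ∀ i, i ≠ i₀ → 0 ≤ ∑ j, K i j * x j) : ∀ i j, K i j = 0 := by
  have hdiag : ∀ i, K i i ≤ 0 → ∀ j, K i j = 0 := by
    intro i hi j
    have hnn : ∀ j ∈ Finset.univ.erase i, 0 ≤ K i j := fun j hj =>
      hoff i j (Finset.ne_of_mem_erase hj).symm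
    have hsn := Finset.sum_nonneg hnn
    have hd := hdd i
    by_cases hj : j = i
    · subst hj; linarith
    · exact (Finset.sum_eq_zero_iff_of_nonneg hnn).mp (by linarith) j
        (Finset.mem_erase.mpr ⟨hj, Finset.mem_univ _⟩)
  have hrow0 : ∀ j, K i₀ j = 0 := by
    apply hdiag
    rw [← Finset.add_sum_erase _ _ (Finset.mem_univ i₀), hi₀,
      Finset.sum_congr rfl fun j hj => by rw [hx j (Finset.ne_of_mem_erase hj)],
      ← Finset.sum_mul] at h1
    nlinarith [mul_le_mul_of_nonneg_left (hdd i₀) hr0.le]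
  intro i
  by_cases hi : i = i₀
  · rw [hi]; exact hrow0
  · apply hdiag
    have h := h2 i hi
    have hterm : ∀ j, K i j * x j = -r * K i j := by
      intro j
      by_cases hj : j = i₀
      · rw [hj, hsym i i₀, hrow0]; ring
      · rw [hx j hj]; ring
    simp only [hterm] at h
    rw [← Finset.mul_sum, ← Finset.add_sum_erase _ _ (Finset.mem_univ i)] at h
    have hsn : 0 ≤ ∑ j ∈ Finset.univ.erase i, K i j := Finset.sum_nonneg fun j hj =>
      hoff i j (Finset.ne_of_mem_erase hj).symm
    nlinarith

/-- The lower bound `‖Jx‖∞ ≥ ℓM ‖x‖∞`, normalised to `‖x‖∞ = x i₀ = 1`, and its equality case. -/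
lemma lower_bound {n : ℕ} (hn : 3 ≤ n) (ℓ : ℝ) (hℓ : 0 < ℓ) (M : ℝ)
    (hM : M * (3 * (n : ℝ) - 4) = 2 * ((n : ℝ) - 2) * ((n : ℝ) - 1))
    (J : Matrix (Fin n) (Fin n) ℝ) (hsym : J.IsSymm)
    (hdd : ∀ i, ∑ j ∈ Finset.univ.erase i, |J i j| ≤ |J i i|)
    (hent : ∀ i j, ℓ ≤ J i j)
    (x : Fin n → ℝ) (i₀ : Fin n) (hi₀ : x i₀ = 1) (hx : ∀ i, |x i| ≤ 1) :
    (∃ k, ℓ * M ≤ |(J *ᵥ x) k|) ∧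
    ((∀ k, |(J *ᵥ x) k| ≤ ℓ * M) →
      J = ℓ • (((n : ℝ) - 2) • (1 : Matrix (Fin n) (Fin n) ℝ) +
        Matrix.of (fun _ _ => (1 : ℝ)))) := by
  have hn' : (3 : ℝ) ≤ n := by exact_mod_cast hn
  have hd : 0 < 3 * (n : ℝ) - 4 := by linarith
  set S : Matrix (Fin n) (Fin n) ℝ := ((n : ℝ) - 2) • (1 : Matrix (Fin n) (Fin n) ℝ) +
        Matrix.of (fun _ _ => (1 : ℝ)) with hS
  set K : Matrix (Fin n) (Fin n) ℝ := J - ℓ • S with hK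
  have hKoff : ∀ i j, i ≠ j → K i j = J i j - ℓ := by
    intro i j hij; simp [hK, hS, Matrix.one_apply_ne hij]
  have hKdiag : ∀ i, K i i = J i i - ℓ * ((n : ℝ) - 1) := by
    intro i; simp [hK, hS]; ring
  have Ksym : ∀ i j, K i j = K j i := by
    intro i j
    by_cases h : i = j
    · rw [h]
    · rw [hKoff i j h, hKoff j i (Ne.symm h), hsym.apply]
  have Koff : ∀ i j, i ≠ j → 0 ≤ K i j := fun i j h => by
    rw [hKoff i j h]; linarith [hent i j]
  have Kdd : ∀ i, ∑ j ∈ Finset.univ.erase i, K i j ≤ K i i := by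
    intro i
    have h := hdd i
    rw [abs_of_nonneg (hℓ.le.trans (hent i i)),
      Finset.sum_congr rfl fun j _ => abs_of_nonneg (hℓ.le.trans (hent i j))] at h
    rw [hKdiag, Finset.sum_congr rfl fun j hj => hKoff i j (Finset.ne_of_mem_erase hj).symm,
      Finset.sum_sub_distrib, Finset.sum_const, Finset.card_erase_of_mem (Finset.mem_univ _),
      Finset.card_univ, Fintype.card_fin, nsmul_eq_mul, Nat.cast_sub (by omega)]
    push_cast
    linarith
  set s : ℝ := ∑ i, x i with hs
  have hJx : ∀ i, (J *ᵥ x) i = ℓ * (((n : ℝ) - 2) * x i + s) + ∑ j, K i j * x j := by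
    intro i
    have hJ : J = ℓ • S + K := by rw [hK]; abel
    rw [hJ, Matrix.add_mulVec, Matrix.smul_mulVec, hS, Matrix.add_mulVec, Matrix.smul_mulVec,
      Matrix.one_mulVec]
    simp [Matrix.mulVec, dotProduct, hs, mul_add]
  have hKi₀ : 0 ≤ ∑ j, K i₀ j * x j := by
    have := bilin_nonneg K Ksym Koff Kdd (Pi.single i₀ 1) x
      (fun i => by
        by_cases h : i = i₀
        · subst h; simp [hi₀]
        · simp [h])
      (fun i j => by
        have a := (abs_le.mp (hx i)).1
        have b := (abs_le.mp (hx j)).1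
        by_cases h : i = i₀ <;> by_cases h' : j = i₀ <;> simp [h, h', hi₀] <;> linarith)
    simpa [Pi.single_apply] using this
  have hext : (∀ k, |(J *ᵥ x) k| ≤ ℓ * M) → ∀ i, i ≠ i₀ → x i = -((n : ℝ) / (3 * n - 4)) := by
    intro hle
    refine extremal_of_tests hn M hM x i₀ hi₀ hx s _ hs rfl ?_ ?_
    · have := (abs_le.mp (hle i₀)).2
      rw [hJx, hi₀] at this
      have : ℓ * ((n : ℝ) - 2 + s) ≤ ℓ * M := by linarith
      exact le_of_mul_le_mul_left this hℓ
    · set t := max ((M + s) / ((n : ℝ) - 2)) 0 with ht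
      have ht0 : 0 ≤ t := le_max_right _ _
      have hb := bilin_nonneg K Ksym Koff Kdd (fun i => thr t (x i)) x
        (fun i => thr_mul_self_nonneg ht0 _) (fun i j => thr_add_mul_nonneg ht0 _ _)
      have hu : ∑ i, (thr t (x i) * (J *ᵥ x) i - ℓ * M * |thr t (x i)|) ≤ 0 := by
        refine Finset.sum_nonpos fun i _ => ?_
        have a := le_abs_self (thr t (x i) * (J *ᵥ x) i)
        rw [abs_mul] at a
        nlinarith [mul_le_mul_of_nonneg_left (hle i) (abs_nonneg (thr t (x i)))]
      have he : ∑ i, (thr t (x i) * (J *ᵥ x) i - ℓ * M * |thr t (x i)|) =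
          ℓ * ∑ i, (thr t (x i) * (((n : ℝ) - 2) * x i + s) - M * |thr t (x i)|) +
          ∑ i, thr t (x i) * ∑ j, K i j * x j := by
        rw [Finset.mul_sum, ← Finset.sum_add_distrib]
        exact Finset.sum_congr rfl fun i _ => by rw [hJx]; ring
      by_contra hcon
      have := mul_pos hℓ (not_le.mp hcon)
      linarith
  set r : ℝ := (n : ℝ) / (3 * n - 4) with hr
  have hrd : r * (3 * (n : ℝ) - 4) = n := by rw [hr]; exact div_mul_cancel₀ _ hd.ne'
  have hsr : (∀ i, i ≠ i₀ → x i = -r) → s = 1 - ((n : ℝ) - 1) * r := by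
    intro h
    rw [hs, ← Finset.add_sum_erase _ _ (Finset.mem_univ i₀), hi₀,
      Finset.sum_congr rfl fun j hj => h j (Finset.ne_of_mem_erase hj), Finset.sum_const,
      Finset.card_erase_of_mem (Finset.mem_univ _), Finset.card_univ, Fintype.card_fin,
      nsmul_eq_mul, Nat.cast_sub (by omega)]
    push_cast; ring
  have hSi₀ : (∀ i, i ≠ i₀ → x i = -r) → (n : ℝ) - 2 + s = M := by
    intro h
    have : (3 * (n : ℝ) - 4) * ((n : ℝ) - 2 + s - M) = 0 := by
      rw [hsr h]; linear_combination (-((n : ℝ) - 1)) * hrd - hM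
    rcases mul_eq_zero.mp this with h | h <;> linarith
  constructor
  · by_contra! hcon
    have h := hext fun k => (hcon k).le
    have a := (abs_lt.mp (hcon i₀)).2
    rw [hJx, hi₀, mul_one, hSi₀ h] at a
    linarith
  · intro hle
    have h := hext hle
    have hz := residual_eq_zero K Ksym Koff Kdd x i₀ hi₀ r (div_pos (by linarith) hd)
      (by rw [hr, div_lt_one hd]; linarith) h
      (by
        have a := (abs_le.mp (hle i₀)).2
        rw [hJx, hi₀, mul_one, hSi₀ h] at a
        linarith)
      (by
        intro i hi
        have a := (abs_le.mp (hle i)).1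
        have e : ((n : ℝ) - 2) * x i + s = -M := by
          have : (3 * (n : ℝ) - 4) * (((n : ℝ) - 2) * x i + s + M) = 0 := by
            rw [h i hi, hsr h]; linear_combination (-(2 * (n : ℝ) - 3)) * hrd + hM
          rcases mul_eq_zero.mp this with h | h <;> linarith
        rw [hJx, e] at a
        linarith)
    have : K = 0 := by ext i j; exact hz i j
    exact sub_eq_zero.mp (hK ▸ this)

theorem inverse_norm_bound_balanced
    (n : ℕ) (hn : 3 ≤ n) (ℓ : ℝ) (hℓ : 0 < ℓ)
    (S : Matrix (Fin n) (Fin n) ℝ)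
    (hS : S = ((n : ℝ) - 2) • (1 : Matrix (Fin n) (Fin n) ℝ) +
      Matrix.of (fun _ _ => (1 : ℝ)))
    (J : Matrix (Fin n) (Fin n) ℝ) (hsym : J.IsSymm)
    (hdd : ∀ i, ∑ j ∈ Finset.univ.erase i, |J i j| ≤ |J i i|)
    (hent : ∀ i j, ℓ ≤ J i j) :
    IsUnit J ∧
    infNorm J⁻¹ ≤ (3 * (n : ℝ) - 4) / (2 * ℓ * ((n : ℝ) - 2) * ((n : ℝ) - 1)) ∧
    (infNorm J⁻¹ = (3 * (n : ℝ) - 4) / (2 * ℓ * ((n : ℝ) - 2) * ((n : ℝ) - 1)) ↔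
      J = ℓ • S) := by
  have hn' : (3 : ℝ) ≤ n := by exact_mod_cast hn
  have hd : 0 < 3 * (n : ℝ) - 4 := by linarith
  have hn2 : 0 < (n : ℝ) - 2 := by linarith
  have hn1 : 0 < (n : ℝ) - 1 := by linarith
  have : Nonempty (Fin n) := ⟨⟨0, by omega⟩⟩
  obtain ⟨M, hMdef⟩ : ∃ M : ℝ, M = 2 * ((n : ℝ) - 2) * ((n : ℝ) - 1) / (3 * (n : ℝ) - 4) :=
    ⟨_, rfl⟩
  have hM : M * (3 * (n : ℝ) - 4) = 2 * ((n : ℝ) - 2) * ((n : ℝ) - 1) := by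
    rw [hMdef]; exact div_mul_cancel₀ _ hd.ne'
  have hMpos : 0 < M := by rw [hMdef]; positivity
  have hc : (3 * (n : ℝ) - 4) / (2 * ℓ * ((n : ℝ) - 2) * ((n : ℝ) - 1)) = 1 / (ℓ * M) := by
    rw [hMdef]; field_simp
  rw [hc]
  have hℓM : 0 < ℓ * M := mul_pos hℓ hMpos
  have hLB := lower_bound hn ℓ hℓ M hM J hsym hdd hent
  rw [← hS] at hLB
  have hunit : IsUnit J := by
    rw [← Matrix.mulVec_injective_iff_isUnit]
    refine (injective_iff_map_eq_zero (Matrix.mulVecLin J)).mpr fun v hv => ?_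
    by_contra hne
    obtain ⟨i₀, hi₀⟩ := Finite.exists_max fun i => |v i|
    have hv0 : v i₀ ≠ 0 := by
      intro h
      apply hne
      ext i
      have := hi₀ i
      rw [h, abs_zero] at this
      exact abs_nonpos_iff.mp this
    obtain ⟨k, hk⟩ := (hLB ((v i₀)⁻¹ • v) i₀ (by simp [hv0]) fun i => by
      simp only [Pi.smul_apply, smul_eq_mul, abs_mul, abs_inv]
      rw [inv_mul_le_iff₀ (abs_pos.mpr hv0), mul_one]
      exact hi₀ i).1
    rw [Matrix.mulVecLin_apply] at hv
    rw [Matrix.mulVec_smul, hv] at hk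
    simp at hk
    linarith
  have hdet : IsUnit J.det := (Matrix.isUnit_iff_isUnit_det J).mp hunit
  have hrow_le : ∀ i, ∑ j, |J⁻¹ i j| ≤ infNorm J⁻¹ := fun i =>
    le_ciSup (f := fun i => ∑ j, |J⁻¹ i j|) (Set.finite_range _).bddAbove i
  obtain ⟨i₀, hi₀⟩ := exists_eq_ciSup_of_finite (f := fun i => ∑ j, |J⁻¹ i j|)
  change ∑ j, |J⁻¹ i₀ j| = infNorm J⁻¹ at hi₀
  obtain ⟨R, hR⟩ : ∃ R, R = infNorm J⁻¹ := ⟨_, rfl⟩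
  rw [← hR] at hi₀ hrow_le ⊢
  have hRnn : 0 ≤ R := by rw [← hi₀]; exact Finset.sum_nonneg fun _ _ => abs_nonneg _
  have hmain : 0 < R → R ≤ 1 / (ℓ * M) ∧ (R = 1 / (ℓ * M) → J = ℓ • S) := by
    intro hRpos
    set y : Fin n → ℝ := fun j => SignType.sign (J⁻¹ i₀ j) with hy
    have hy1 : ∀ j, |y j| ≤ 1 := by
      intro j
      simp only [hy]
      rcases lt_trichotomy (J⁻¹ i₀ j) 0 with h | h | h <;> simp [h]
    have hv0 : (J⁻¹ *ᵥ y) i₀ = R := by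
      rw [← hi₀, Matrix.mulVec_apply_eq_sum]
      exact Finset.sum_congr rfl fun j _ => self_mul_sign (J⁻¹ i₀ j)
    have hvle : ∀ i, |(J⁻¹ *ᵥ y) i| ≤ R := by
      intro i
      rw [Matrix.mulVec_apply_eq_sum]
      refine (Finset.abs_sum_le_sum_abs _ _).trans (le_trans ?_ (hrow_le i))
      refine Finset.sum_le_sum fun j _ => ?_
      rw [abs_mul]
      exact mul_le_of_le_one_right (abs_nonneg _) (hy1 j)
    have hJx : J *ᵥ (R⁻¹ • (J⁻¹ *ᵥ y)) = R⁻¹ • y := by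
      rw [Matrix.mulVec_smul, Matrix.mulVec_mulVec, Matrix.mul_nonsing_inv _ hdet,
        Matrix.one_mulVec]
    have hJxle : ∀ k, |(R⁻¹ • y) k| ≤ R⁻¹ := by
      intro k
      rw [Pi.smul_apply, smul_eq_mul, abs_mul, abs_of_pos (inv_pos.mpr hRpos)]
      exact mul_le_of_le_one_right (inv_pos.mpr hRpos).le (hy1 k)
    have hl := hLB (R⁻¹ • (J⁻¹ *ᵥ y)) i₀
      (by rw [Pi.smul_apply, hv0, smul_eq_mul, inv_mul_cancel₀ hRpos.ne'])
      (fun i => by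
        rw [Pi.smul_apply, smul_eq_mul, abs_mul, abs_of_pos (inv_pos.mpr hRpos),
          inv_mul_le_iff₀ hRpos, mul_one]
        exact hvle i)
    rw [hJx] at hl
    obtain ⟨⟨k, hk⟩, heq⟩ := hl
    refine ⟨?_, fun hReq => heq fun k => (hJxle k).trans ?_⟩
    · rw [one_div]
      exact (le_inv_comm₀ hℓM hRpos).mp (hk.trans (hJxle k))
    · rw [hReq, one_div, inv_inv]
  have hpos : 0 < 1 / (ℓ * M) := one_div_pos.mpr hℓM
  have hle : R ≤ 1 / (ℓ * M) := by
    rcases hRnn.eq_or_lt with h | h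
    · rw [← h]; exact hpos.le
    · exact (hmain h).1
  refine ⟨hunit, hle, fun h => (hmain (h ▸ hpos)).2 h, fun hJ => le_antisymm hle ?_⟩
  -- For `J = ℓS`, the vector `x = (1,-r,…,-r)` has `‖x‖∞ = 1` and `Jx = ℓM(1,-1,…,-1)`.
  obtain ⟨k₀⟩ : Nonempty (Fin n) := inferInstance
  set r : ℝ := (n : ℝ) / (3 * n - 4) with hr
  have hrd : r * (3 * (n : ℝ) - 4) = n := by rw [hr]; exact div_mul_cancel₀ _ hd.ne'
  set x : Fin n → ℝ := fun i => if i = k₀ then 1 else -r with hx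
  have hsum : ∑ i, x i = 1 - ((n : ℝ) - 1) * r := by
    rw [← Finset.add_sum_erase _ _ (Finset.mem_univ k₀),
      Finset.sum_congr rfl fun j hj => if_neg (Finset.ne_of_mem_erase hj), Finset.sum_const,
      Finset.card_erase_of_mem (Finset.mem_univ _), Finset.card_univ, Fintype.card_fin,
      nsmul_eq_mul, Nat.cast_sub (by omega)]
    simp [hx]; ring
  have hJx : ∀ i, |(J *ᵥ x) i| = ℓ * M := by
    intro i
    have e : (J *ᵥ x) i = ℓ * (((n : ℝ) - 2) * x i + ∑ i, x i) := by
      rw [hJ, hS, Matrix.smul_mulVec, Matrix.add_mulVec, Matrix.smul_mulVec, Matrix.one_mulVec]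
      simp [Matrix.mulVec, dotProduct]
    rw [e, abs_mul, abs_of_pos hℓ, hsum]
    congr 1
    by_cases h : i = k₀
    · have : (3 * (n : ℝ) - 4) * (((n : ℝ) - 2) * x i + (1 - ((n : ℝ) - 1) * r) - M) = 0 := by
        simp only [hx, if_pos h]; linear_combination (-((n : ℝ) - 1)) * hrd - hM
      rcases mul_eq_zero.mp this with h | h
      · linarith
      · rw [sub_eq_zero.mp h, abs_of_pos hMpos]
    · have : (3 * (n : ℝ) - 4) * (((n : ℝ) - 2) * x i + (1 - ((n : ℝ) - 1) * r) + M) = 0 := by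
        simp only [hx, if_neg h]; linear_combination (-(2 * (n : ℝ) - 3)) * hrd + hM
      rcases mul_eq_zero.mp this with h | h
      · linarith
      · rw [eq_neg_of_add_eq_zero_left h, abs_neg, abs_of_pos hMpos]
  have hxk : (J⁻¹ *ᵥ (J *ᵥ x)) k₀ = 1 := by
    rw [Matrix.mulVec_mulVec, Matrix.nonsing_inv_mul _ hdet, Matrix.one_mulVec]
    simp [hx]
  rw [div_le_iff₀ hℓM]
  calc (1 : ℝ) = |(J⁻¹ *ᵥ (J *ᵥ x)) k₀| := by rw [hxk, abs_one]
    _ ≤ ∑ j, |J⁻¹ k₀ j * (J *ᵥ x) j| := by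
        rw [Matrix.mulVec_apply_eq_sum]
        exact Finset.abs_sum_le_sum_abs _ _
    _ = (∑ j, |J⁻¹ k₀ j|) * (ℓ * M) := by
        rw [Finset.sum_mul]
        exact Finset.sum_congr rfl fun j _ => by rw [abs_mul, hJx]
    _ ≤ R * (ℓ * M) := mul_le_mul_of_nonneg_right (hrow_le k₀) hℓM.le
end

section
/- Let n ≥ 3, let ℓ > 0 and α ≥ (n−2)ℓ, and set S = αIₙ + ℓ𝟙ₙ𝟙ₙᵀ. Let P be a nonzero n×n real symmetric diagonally dominant matrix with nonnegative entries, and define f(t) = ‖(S + tP)⁻¹‖∞ for t ≥ 0. Then f is right-differentiable at 0 and its right derivative at 0 is strictly negative: there exists c < 0 with (f(t) − f(0))/t → c as t → 0⁺. -/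
/-!
Write `J` for the all-ones matrix, `β = ℓ / (α + n ℓ)` and `A t = (S + t P)⁻¹`. Then
`A 0 = α⁻¹ (1 - β J)` has positive diagonal and negative off-diagonal entries, and by continuity so
does `A t` for small `t`. Hence the `i`-th absolute row sum of `A t` is the linear expression
`∑ j, σ i j * A t i j` with the constant signs `σ = 2 - J`. At `t = 0` these row sums all agree, so
the difference quotient of `f` is the maximum over `i` of the difference quotients of the rows;
since `A t - A 0 = -t • (A t * P * A 0)`, it converges to the maximum over `i` of
`-∑ j, σ i j * (A 0 * P * A 0) i j`.

It remains to see that each of these numbers is negative. With `γ = 1 - β (n - 2)`, `r` the row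
sums of `P` and `R` their total, `α² ∑ j, σ i j * (A 0 * P * A 0) i j` equals
`2 P i i - (γ + 2 β) r i + β γ R`. Put `p = P i i` and `o = r i - p`. Diagonal dominance gives
`o ≤ p`, and together with symmetry `p + 3 o ≤ R`, since every other row `k` has sum at least
`2 P k i`. The expression is
`(p - o) (2 - γ - 2 β + β γ) + 2 β (n - 2) (1 - 2 β) o + β γ (R - p - 3 o)`,
a combination of nonnegative terms with positive coefficients (as `β ≤ 1 / (2 (n - 1))`), and it
vanishes only if `R = 0`, that is, `P = 0`.
-/

open Matrix

/-- The sign pattern of `S⁻¹`: `1` on the diagonal and `-1` off it. -/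
def signPattern {n : ℕ} (i j : Fin n) : ℝ := if i = j then 1 else -1

lemma sum_signPattern_mul {n : ℕ} (i : Fin n) (v : Fin n → ℝ) :
    ∑ j, signPattern i j * v j = 2 * v i - ∑ j, v j := by
  have h : ∀ j, signPattern i j * v j = 2 * (if i = j then v j else 0) - v j := by
    intro j
    unfold signPattern
    split_ifs <;> ring
  simp [h, Finset.sum_sub_distrib]

lemma inv_smul_one_add_smul_ones {n : ℕ} {α ℓ : ℝ} (hα : α ≠ 0) (h : α + n * ℓ ≠ 0) :
    (α • (1 : Matrix (Fin n) (Fin n) ℝ) + ℓ • Matrix.of (fun _ _ => (1 : ℝ))) *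
      (α⁻¹ • ((1 : Matrix (Fin n) (Fin n) ℝ) -
        (ℓ / (α + n * ℓ)) • Matrix.of (fun _ _ => (1 : ℝ)))) = 1 := by
  have hJ : (Matrix.of (fun _ _ => (1 : ℝ)) : Matrix (Fin n) (Fin n) ℝ) *
      Matrix.of (fun _ _ => (1 : ℝ)) = (n : ℝ) • Matrix.of (fun _ _ => (1 : ℝ)) := by
    ext i j
    simp [Matrix.mul_apply]
  simp only [Matrix.add_mul, Matrix.mul_sub, Matrix.smul_mul, Matrix.mul_smul, Matrix.one_mul,
    Matrix.mul_one, hJ]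
  ext i j
  simp only [Matrix.add_apply, Matrix.smul_apply, Matrix.sub_apply, Matrix.of_apply, smul_eq_mul]
  have hx : (α + n * ℓ) * (ℓ / (α + n * ℓ)) = ℓ := mul_div_cancel₀ _ h
  generalize ℓ / (α + n * ℓ) = b at hx ⊢
  field_simp
  linear_combination -hx

/-- The resolvent identity `(S + t P)⁻¹ - S⁻¹ = -t (S + t P)⁻¹ P S⁻¹`. -/
lemma inv_add_smul_sub_inv {n : ℕ} {S P : Matrix (Fin n) (Fin n) ℝ} {t : ℝ}
    (hS : IsUnit S.det) (ht : IsUnit (S + t • P).det) :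
    (S + t • P)⁻¹ - S⁻¹ = -(t • ((S + t • P)⁻¹ * P * S⁻¹)) := by
  have h1 : (S + t • P)⁻¹ * (S + t • P) * S⁻¹ = S⁻¹ := by
    rw [Matrix.nonsing_inv_mul _ ht, Matrix.one_mul]
  rw [Matrix.mul_add, Matrix.add_mul, Matrix.mul_assoc, Matrix.mul_nonsing_inv _ hS,
    Matrix.mul_one, Matrix.mul_smul, Matrix.smul_mul] at h1
  rw [sub_eq_iff_eq_add, eq_neg_add_iff_add_eq, add_comm]
  exact h1

lemma continuousAt_inv_add_smul {n : ℕ} {S P : Matrix (Fin n) (Fin n) ℝ} (hS : IsUnit S.det) :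
    ContinuousAt (fun t : ℝ => (S + t • P)⁻¹) 0 := by
  simp only [Matrix.inv_def, Ring.inverse_eq_inv']
  have hc : Continuous (fun t : ℝ => S + t • P) := by fun_prop
  refine ContinuousAt.smul (ContinuousAt.inv₀ hc.matrix_det.continuousAt ?_)
    hc.matrix_adjugate.continuousAt
  simpa using hS.ne_zero

/-- If the absolute row sums are given by a fixed sign pattern at times `t` and `0`, with equal
values at time `0`, then the difference quotient of the norm is the largest row quotient. -/
lemma infNorm_quotient {n : ℕ} [Nonempty (Fin n)] (A B : Matrix (Fin n) (Fin n) ℝ) {t m : ℝ}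
    (ht : 0 < t) (hA : ∀ i j, 0 ≤ signPattern i j * A i j)
    (hB : ∀ i j, 0 ≤ signPattern i j * B i j)
    (hm : ∀ i, ∑ j, signPattern i j * B i j = m) :
    (infNorm A - infNorm B) / t =
      Finset.univ.sup' Finset.univ_nonempty
        (fun i => ∑ j, signPattern i j * ((A i j - B i j) / t)) := by
  have habs : ∀ (M : Matrix (Fin n) (Fin n) ℝ), (∀ i j, 0 ≤ signPattern i j * M i j) →
      ∀ i j, |M i j| = signPattern i j * M i j := by
    intro M hM i j
    rw [← abs_of_nonneg (hM i j), abs_mul]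
    have : |signPattern i j| = 1 := by
      unfold signPattern
      split_ifs <;> simp
    rw [this, one_mul]
  have h0 : infNorm B = m := by
    simp only [infNorm, habs B hB, hm, ciSup_const]
  have hA' : infNorm A = Finset.univ.sup' Finset.univ_nonempty
      (fun i => ∑ j, signPattern i j * A i j) := by
    rw [Finset.sup'_univ_eq_ciSup]
    simp only [infNorm, habs A hA]
  have hmono : Monotone (fun x : ℝ => (x - m) / t) := by
    intro x y hxy
    dsimp only
    gcongr
  rw [h0, hA']
  refine (Finset.apply_sup'_eq_sup'_comp Finset.univ_nonempty (fun x : ℝ => (x - m) / t)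
    (fun x y => hmono.map_sup x y)).trans ?_
  congr 1
  funext i
  simp only [Function.comp]
  rw [← hm i, ← Finset.sum_sub_distrib, Finset.sum_div]
  refine Finset.sum_congr rfl fun j _ => ?_
  ring

/-- The explicit value of `∑ j, σ i j * (A * P * A) i j` for `A = a (1 - b J)` and `P`
symmetric: `A` maps the `i`-th sign vector to `a (2 eᵢ - (1 - b (n - 2)) 𝟙)`. -/
lemma sum_signPattern_conj {n : ℕ} (a b : ℝ) (P : Matrix (Fin n) (Fin n) ℝ) (hP : P.IsSymm)
    (A : Matrix (Fin n) (Fin n) ℝ)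
    (hA : A = a • ((1 : Matrix (Fin n) (Fin n) ℝ) - b • Matrix.of (fun _ _ => (1 : ℝ))))
    (i : Fin n) :
    ∑ j, signPattern i j * (A * P * A) i j =
      a ^ 2 * (2 * P i i - ((1 - b * (n - 2)) + 2 * b) * ∑ j, P i j
        + b * (1 - b * (n - 2)) * ∑ k, ∑ j, P k j) := by
  have hl : ∀ v : Fin n → ℝ, ∀ k, ∑ l, A k l * v l = a * (v k - b * ∑ l, v l) := by
    intro v k
    simp [hA, Matrix.one_apply, mul_assoc, sub_mul, Finset.sum_sub_distrib, ← Finset.mul_sum]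
  have hr : ∀ v : Fin n → ℝ, ∀ k, ∑ l, v l * A l k = a * (v k - b * ∑ l, v l) := by
    intro v k
    rw [← hl]
    refine Finset.sum_congr rfl fun l _ => ?_
    simp [hA, Matrix.one_apply, eq_comm, mul_comm]
  have hAP : ∀ k, (A * P) i k = a * (P i k - b * ∑ j, P k j) := by
    intro k
    rw [Matrix.mul_apply, hl (fun l => P l k)]
    simp only [hP.apply]
  have hAPA : ∀ k, (A * P * A) i k = a * ((A * P) i k - b * ∑ l, (A * P) i l) := by
    intro k
    rw [Matrix.mul_apply, hr]
  rw [sum_signPattern_mul]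
  simp only [hAPA, Finset.sum_sub_distrib, ← Finset.mul_sum, hAP, Finset.sum_const,
    Finset.card_univ, Fintype.card_fin, nsmul_eq_mul]
  ring

/-- Positivity of `2 p - (γ + 2 β) (p + o) + β γ R`, where `b = β`, `γ = 1 - β (N - 2)`,
`N` is the dimension, `p` a diagonal entry of `P`, `o` the off-diagonal sum in its row and `R` the sum of all entries. -/
lemma row_form_pos {N b p o R : ℝ} (hN : 3 ≤ N) (hb : 0 < b) (hbN : b * (2 * (N - 1)) ≤ 1)
    (ho : 0 ≤ o) (hop : o ≤ p) (hR : p + 3 * o ≤ R) (hR0 : 0 < R) :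
    0 < 2 * p - ((1 - b * (N - 2)) + 2 * b) * (p + o) + b * (1 - b * (N - 2)) * R := by
  have hg : 0 < 1 - b * (N - 2) := by nlinarith
  have hb4 : b * 4 ≤ 1 := by nlinarith
  have hbg : 0 < b * (1 - b * (N - 2)) := mul_pos hb hg
  have hc : 0 < 2 - (1 - b * (N - 2)) - 2 * b + b * (1 - b * (N - 2)) := by nlinarith
  have hd : 0 < 2 * b * (N - 2) * (1 - 2 * b) := by
    have : 0 < N - 2 := by linarith
    have : 0 < 1 - 2 * b := by linarith
    positivity
  have key : 2 * p - ((1 - b * (N - 2)) + 2 * b) * (p + o) + b * (1 - b * (N - 2)) * R =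
      (p - o) * (2 - (1 - b * (N - 2)) - 2 * b + b * (1 - b * (N - 2))) +
      2 * b * (N - 2) * (1 - 2 * b) * o + b * (1 - b * (N - 2)) * (R - p - 3 * o) := by ring
  rw [key]
  have h1 := mul_nonneg (sub_nonneg.2 hop) hc.le
  have h2 := mul_nonneg hd.le ho
  have h3 : 0 ≤ b * (1 - b * (N - 2)) * (R - p - 3 * o) := mul_nonneg hbg.le (by linarith)
  rcases ho.eq_or_lt with rfl | ho'
  · rcases hop.eq_or_lt with rfl | hp'
    · have := mul_pos hbg hR0
      simpa using this
    · have := mul_pos (sub_pos.2 hp') hc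
      linarith
  · have := mul_pos hd ho'
    linarith

/-- By diagonal dominance and symmetry, every row `k ≠ i` of `P` has sum at least `2 P i k`;
summing these bounds gives the claim. -/
lemma diag_add_three_offdiag_le {n : ℕ} (P : Matrix (Fin n) (Fin n) ℝ) (hPsym : P.IsSymm)
    (hPpos : ∀ i j, 0 ≤ P i j)
    (hPdd : ∀ i, ∑ j ∈ Finset.univ.erase i, P i j ≤ P i i) (i : Fin n) :
    P i i + 3 * ∑ j ∈ Finset.univ.erase i, P i j ≤ ∑ k, ∑ j, P k j := by
  have hrow : ∀ k, ∑ j, P k j = P k k + ∑ j ∈ Finset.univ.erase k, P k j := fun k =>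
    (Finset.add_sum_erase _ _ (Finset.mem_univ k)).symm
  have hk : ∀ k ∈ Finset.univ.erase i, 2 * P i k ≤ ∑ j, P k j := by
    intro k hk
    have hne : i ≠ k := (Finset.ne_of_mem_erase hk).symm
    have h1 : P k i ≤ ∑ j ∈ Finset.univ.erase k, P k j :=
      Finset.single_le_sum (f := fun j => P k j) (fun j _ => hPpos k j)
        (Finset.mem_erase.2 ⟨hne, Finset.mem_univ i⟩)
    rw [hrow k, ← hPsym.apply]
    linarith [hPdd k]
  have h2 := Finset.sum_le_sum hk
  rw [← Finset.mul_sum] at h2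
  rw [← Finset.add_sum_erase _ (fun k => ∑ j, P k j) (Finset.mem_univ i), hrow i]
  linarith

theorem inverse_norm_strictly_decreasing_at_S
    (n : ℕ) (hn : 3 ≤ n) (ℓ α : ℝ) (hℓ : 0 < ℓ) (hα : ((n : ℝ) - 2) * ℓ ≤ α)
    (S : Matrix (Fin n) (Fin n) ℝ)
    (hS : S = α • (1 : Matrix (Fin n) (Fin n) ℝ) +
      ℓ • Matrix.of (fun _ _ => (1 : ℝ)))
    (P : Matrix (Fin n) (Fin n) ℝ) (hP0 : P ≠ 0) (hPsym : P.IsSymm)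
    (hPpos : ∀ i j, 0 ≤ P i j)
    (hPdd : ∀ i, ∑ j ∈ Finset.univ.erase i, |P i j| ≤ |P i i|)
    (f : ℝ → ℝ) (hf : ∀ t, f t = infNorm (S + t • P)⁻¹) :
    ∃ c : ℝ, c < 0 ∧
      Filter.Tendsto (fun t => (f t - f 0) / t) (nhdsWithin 0 (Set.Ioi 0)) (nhds c) := by
  have : Nonempty (Fin n) := ⟨⟨0, by omega⟩⟩
  have hN : (3 : ℝ) ≤ n := by exact_mod_cast hn
  have hα0 : 0 < α := by nlinarith
  have hden : 0 < α + n * ℓ := by positivity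
  simp only [abs_of_nonneg (hPpos _ _)] at hPdd
  obtain ⟨b, hb⟩ : ∃ b, b = ℓ / (α + n * ℓ) := ⟨_, rfl⟩
  have hb0 : 0 < b := hb ▸ div_pos hℓ hden
  have hbN : b * (2 * ((n : ℝ) - 1)) ≤ 1 := by
    rw [hb, div_mul_eq_mul_div, div_le_one hden]
    nlinarith
  have hb1 : b < 1 := by nlinarith
  have hmul := inv_smul_one_add_smul_ones (n := n) (ℓ := ℓ) hα0.ne' hden.ne'
  rw [← hS, ← hb] at hmul
  have hSinv := Matrix.inv_eq_right_inv hmul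
  have hSu : IsUnit S.det := Matrix.isUnit_det_of_right_inverse hmul
  have hcont := continuousAt_inv_add_smul (P := P) hSu
  have hent : ∀ i j, ContinuousAt (fun t : ℝ => (S + t • P)⁻¹ i j) 0 := fun i j =>
    (continuous_id.matrix_elem i j).continuousAt.comp hcont
  have hsign0 : ∀ i j, 0 < signPattern i j * S⁻¹ i j := by
    intro i j
    rw [hSinv]
    unfold signPattern
    have := inv_pos.2 hα0
    split_ifs with hij
    · subst hij
      have : 0 < 1 - b := by linarith
      simp
      positivity
    · simp [hij]
      positivity
  have hsign : ∀ᶠ t in nhds (0 : ℝ), ∀ i j, 0 < signPattern i j * (S + t • P)⁻¹ i j := by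
    rw [Filter.eventually_all]
    intro i
    rw [Filter.eventually_all]
    intro j
    refine (continuousAt_const.mul (hent i j)).eventually (lt_mem_nhds ?_)
    simpa using hsign0 i j
  have hunit : ∀ᶠ t in nhds (0 : ℝ), IsUnit (S + t • P).det := by
    have hc : Continuous (fun t : ℝ => S + t • P) := by fun_prop
    simp only [isUnit_iff_ne_zero]
    refine hc.matrix_det.continuousAt.eventually_ne ?_
    simpa using hSu.ne_zero
  have hrow0 : ∀ i, ∑ j, signPattern i j * S⁻¹ i j = α⁻¹ * (2 * (1 - b) - (1 - n * b)) := by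
    intro i
    rw [sum_signPattern_mul, hSinv]
    simp [← Finset.mul_sum, Finset.sum_sub_distrib, Matrix.one_apply]
    ring
  refine ⟨Finset.univ.sup' Finset.univ_nonempty
    (fun i => ∑ j, signPattern i j * -(S⁻¹ * P * S⁻¹) i j), ?_, ?_⟩
  · rw [Finset.sup'_lt_iff]
    intro i _
    simp only [mul_neg, Finset.sum_neg_distrib, neg_lt_zero]
    rw [sum_signPattern_conj _ _ P hPsym _ hSinv i]
    refine mul_pos (by positivity) ?_
    rw [← Finset.add_sum_erase _ (fun j => P i j) (Finset.mem_univ i)]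
    refine row_form_pos hN hb0 hbN (Finset.sum_nonneg fun j _ => hPpos i j) (hPdd i)
      (diag_add_three_offdiag_le P hPsym hPpos hPdd i) ?_
    refine lt_of_le_of_ne (Finset.sum_nonneg fun k _ => Finset.sum_nonneg fun j _ => hPpos k j) ?_
    intro h
    apply hP0
    ext k j
    have h1 := (Finset.sum_eq_zero_iff_of_nonneg
      (fun k _ => Finset.sum_nonneg fun j _ => hPpos k j)).1 h.symm k (Finset.mem_univ k)
    exact (Finset.sum_eq_zero_iff_of_nonneg (fun j _ => hPpos k j)).1 h1 j (Finset.mem_univ j)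
  · have hlim : Filter.Tendsto (fun t : ℝ => Finset.univ.sup' Finset.univ_nonempty
        (fun i => ∑ j, signPattern i j * -((S + t • P)⁻¹ * P * S⁻¹) i j))
        (nhdsWithin 0 (Set.Ioi 0)) (nhds (Finset.univ.sup' Finset.univ_nonempty
          (fun i => ∑ j, signPattern i j * -(S⁻¹ * P * S⁻¹) i j))) := by
      refine Filter.Tendsto.finset_sup'_nhds_apply Finset.univ_nonempty fun i _ => ?_
      refine tendsto_finsetSum _ fun j _ => ?_
      refine Filter.Tendsto.const_mul _ (Filter.Tendsto.neg ?_)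
      have hcm : Continuous (fun M : Matrix (Fin n) (Fin n) ℝ => (M * P * S⁻¹) i j) := by
        fun_prop
      have := (hcm.continuousAt.comp hcont).tendsto
      simp only [Function.comp_def, zero_smul, add_zero] at this
      exact this.mono_left nhdsWithin_le_nhds
    refine hlim.congr' ?_
    filter_upwards [nhdsWithin_le_nhds hsign, nhdsWithin_le_nhds hunit, self_mem_nhdsWithin]
      with t hst hut ht
    rw [hf, hf, zero_smul, add_zero, infNorm_quotient _ _ ht (fun i j => (hst i j).le)
      (fun i j => (hsign0 i j).le) hrow0]
    congr 1
    funext i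
    refine Finset.sum_congr rfl fun j _ => ?_
    rw [← Matrix.sub_apply, inv_add_smul_sub_inv hSu hut, Matrix.neg_apply, Matrix.smul_apply,
      smul_eq_mul, neg_div, mul_div_cancel_left₀ _ (ne_of_gt ht)]
end

section
/- Let n ≥ 3, let ℓ > 0 and α ≥ (n−2)ℓ, and set S = αIₙ + ℓ𝟙ₙ𝟙ₙᵀ. Let P be an n×n signless Laplacian matrix. Then there exists an n×n matrix N such that (S + tP)⁻¹ → N as t → ∞, and ‖N‖∞ ≤ ‖S⁻¹‖∞ = 1/α + ℓ(n−2)/(α(α+ℓn)), with equality ‖N‖∞ = ‖S⁻¹‖∞ if and only if P = 0. -/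
/-!
View `P` as a graph with adjacency matrix its off-diagonal part. Its quadratic form is a sum of
the squares `(x i + x j) ^ 2` over the edges plus nonnegative terms `Δ i * x i ^ 2`, so `ker P`
consists of the vectors that alternate in sign along edges and vanish where `Δ i ≠ 0`. Let `Q` be
the orthogonal projection onto `ker P`, `w = Q 𝟙` and `T = 𝟙ᵀ Q 𝟙 = ∑ w j ^ 2`. The limit is the
inverse of `S` compressed to `ker P`, namely `N = α⁻¹ (Q - κ w wᵀ)` with `κ = ℓ / (α + ℓ T)`
(`tendsto_inverse`).

A connected component of size `m` either meets `ker P` trivially or carries one alternating sign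
vector `ε`, where `Q i j = ε i * ε j / m`; with `d` the sum of `ε` over the component,
`w i = ε i * d / m`. A nonzero row `i` of `α N` therefore has absolute sum
`1 + κ |w i| (s - 2 |d|)`, with `s = ∑ |w j|`, and here `|d| ≥ 1` unless `w i = 0`
(`exists_projection`). As `s ^ 2 ≤ n T` by Cauchy-Schwarz, an elementary inequality
(`scalar_bound`) shows this to be less than `1 + ℓ (n - 2) / (α + ℓ n)`, the value for `S⁻¹`, as
long as `s < n`. If `s = n`, then `∑ w j = T = n`, so `w = 𝟙` is in `ker P` and `P = 0`.
-/

open Matrix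

/-! ### The kernel of a signless Laplacian -/

/-- The equations cutting out the kernel of a signless Laplacian: `x` changes sign along every
edge of the graph of `P` and vanishes at every vertex with nonzero diagonal excess. -/
def IsAlternating {n : ℕ} (P : Matrix (Fin n) (Fin n) ℝ) (x : Fin n → ℝ) : Prop :=
  (∀ i j, i ≠ j → P i j ≠ 0 → x i = -x j) ∧
    ∀ i, P i i - ∑ j ∈ Finset.univ.erase i, P i j ≠ 0 → x i = 0

lemma mulVec_eq_excess {n : ℕ} (P : Matrix (Fin n) (Fin n) ℝ) (x : Fin n → ℝ) (i : Fin n) :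
    (P *ᵥ x) i = (P i i - ∑ j ∈ Finset.univ.erase i, P i j) * x i
      + ∑ j, (if i = j then 0 else P i j) * (x i + x j) := by
  have e : ∀ f : Fin n → ℝ, ∑ j, (if i = j then 0 else f j) = ∑ j ∈ Finset.univ.erase i, f j := by
    intro f
    rw [← Finset.add_sum_erase _ _ (Finset.mem_univ i)]
    simp only [if_true, zero_add]
    exact Finset.sum_congr rfl fun j hj => by
      rw [if_neg (Finset.ne_of_mem_erase hj).symm]
  simp only [ite_mul, zero_mul]
  rw [e, Matrix.mulVec, dotProduct, ← Finset.add_sum_erase _ _ (Finset.mem_univ i)]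
  simp only [mul_add, Finset.sum_add_distrib, ← Finset.sum_mul]
  ring

/-- The quadratic form of `P` is a sum of squares, one for each edge and each vertex with
nonzero excess. -/
lemma two_mul_quadratic_form {n : ℕ} (P : Matrix (Fin n) (Fin n) ℝ) (hP : P.IsSymm)
    (x : Fin n → ℝ) :
    2 * (x ⬝ᵥ P *ᵥ x) =
      2 * (∑ i, (P i i - ∑ j ∈ Finset.univ.erase i, P i j) * x i ^ 2)
        + ∑ i, ∑ j, (if i = j then 0 else P i j) * (x i + x j) ^ 2 := by
  have h1 : x ⬝ᵥ P *ᵥ x = (∑ i, (P i i - ∑ j ∈ Finset.univ.erase i, P i j) * x i ^ 2)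
      + ∑ i, ∑ j, (if i = j then 0 else P i j) * (x i + x j) * x i := by
    rw [dotProduct, ← Finset.sum_add_distrib]
    refine Finset.sum_congr rfl fun i _ => ?_
    rw [mulVec_eq_excess, mul_add, Finset.mul_sum]
    congr 1
    · ring
    · exact Finset.sum_congr rfl fun j _ => by ring
  have h2 : ∑ i, ∑ j, (if i = j then 0 else P i j) * (x i + x j) * x i
      = ∑ i, ∑ j, (if i = j then 0 else P i j) * (x i + x j) * x j := by
    rw [Finset.sum_comm]
    refine Finset.sum_congr rfl fun i _ => Finset.sum_congr rfl fun j _ => ?_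
    rw [hP.apply i j, add_comm (x i)]
    simp only [eq_comm]
  have h3 : ∑ i, ∑ j, (if i = j then 0 else P i j) * (x i + x j) ^ 2
      = ∑ i, ∑ j, (if i = j then 0 else P i j) * (x i + x j) * x i
        + ∑ i, ∑ j, (if i = j then 0 else P i j) * (x i + x j) * x j := by
    simp only [← Finset.sum_add_distrib]
    exact Finset.sum_congr rfl fun i _ => Finset.sum_congr rfl fun j _ => by ring
  rw [h1, h3, ← h2]
  ring

lemma offDiag_nonneg {n : ℕ} {P : Matrix (Fin n) (Fin n) ℝ}
    (hP01 : ∀ i j, i ≠ j → P i j = 0 ∨ P i j = 1) (i j : Fin n) :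
    0 ≤ (if i = j then 0 else P i j) := by
  split_ifs with h
  · exact le_rfl
  · rcases hP01 i j h with h | h <;> simp [h]

lemma quadratic_form_nonneg {n : ℕ} {P : Matrix (Fin n) (Fin n) ℝ} (hP : P.IsSymm)
    (hP01 : ∀ i j, i ≠ j → P i j = 0 ∨ P i j = 1)
    (hΔ : ∀ i, 0 ≤ P i i - ∑ j ∈ Finset.univ.erase i, P i j) (x : Fin n → ℝ) :
    0 ≤ x ⬝ᵥ P *ᵥ x := by
  have h := two_mul_quadratic_form P hP x
  have h1 : 0 ≤ ∑ i, (P i i - ∑ j ∈ Finset.univ.erase i, P i j) * x i ^ 2 :=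
    Finset.sum_nonneg fun i _ => mul_nonneg (hΔ i) (sq_nonneg _)
  have h2 : 0 ≤ ∑ i, ∑ j, (if i = j then 0 else P i j) * (x i + x j) ^ 2 :=
    Finset.sum_nonneg fun i _ => Finset.sum_nonneg fun j _ =>
      mul_nonneg (offDiag_nonneg hP01 i j) (sq_nonneg _)
  linarith

lemma mulVec_eq_zero_iff_isAlternating {n : ℕ} {P : Matrix (Fin n) (Fin n) ℝ} (hP : P.IsSymm)
    (hP01 : ∀ i j, i ≠ j → P i j = 0 ∨ P i j = 1)
    (hΔ : ∀ i, 0 ≤ P i i - ∑ j ∈ Finset.univ.erase i, P i j) (x : Fin n → ℝ) :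
    P *ᵥ x = 0 ↔ IsAlternating P x := by
  constructor
  · intro hx
    have h := two_mul_quadratic_form P hP x
    rw [hx, dotProduct_zero] at h
    have n1 : ∀ i ∈ Finset.univ, 0 ≤ (P i i - ∑ j ∈ Finset.univ.erase i, P i j) * x i ^ 2 :=
      fun i _ => mul_nonneg (hΔ i) (sq_nonneg _)
    have n2 : ∀ i j, 0 ≤ (if i = j then 0 else P i j) * (x i + x j) ^ 2 := fun i j =>
      mul_nonneg (offDiag_nonneg hP01 i j) (sq_nonneg _)
    have n3 : ∀ i ∈ Finset.univ, 0 ≤ ∑ j, (if i = j then 0 else P i j) * (x i + x j) ^ 2 :=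
      fun i _ => Finset.sum_nonneg fun j _ => n2 i j
    have s1 := Finset.sum_nonneg n1
    have s2 := Finset.sum_nonneg n3
    have z1 := (Finset.sum_eq_zero_iff_of_nonneg n1).1 (by linarith)
    have z2 := (Finset.sum_eq_zero_iff_of_nonneg n3).1 (by linarith)
    refine ⟨fun i j hij hPij => ?_, fun i hi => ?_⟩
    · have := (Finset.sum_eq_zero_iff_of_nonneg fun j _ => n2 i j).1
        (z2 i (Finset.mem_univ _)) j (Finset.mem_univ _)
      rw [if_neg hij] at this
      have := pow_eq_zero_iff (two_ne_zero) |>.1 ((mul_eq_zero.1 this).resolve_left hPij)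
      linarith
    · exact pow_eq_zero_iff (two_ne_zero) |>.1
        ((mul_eq_zero.1 (z1 i (Finset.mem_univ _))).resolve_left hi)
  · rintro ⟨h1, h2⟩
    ext i
    rw [mulVec_eq_excess, Pi.zero_apply]
    have e1 : (P i i - ∑ j ∈ Finset.univ.erase i, P i j) * x i = 0 := by
      by_cases h : P i i - ∑ j ∈ Finset.univ.erase i, P i j = 0
      · rw [h, zero_mul]
      · rw [h2 i h, mul_zero]
    rw [e1, zero_add]
    refine Finset.sum_eq_zero fun j _ => ?_
    by_cases hij : i = j
    · simp [hij]
    · rw [if_neg hij]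
      by_cases h : P i j = 0
      · rw [h, zero_mul]
      · rw [h1 i j hij h]; ring

/-! ### The projection onto the kernel -/

/-- The graph whose adjacency matrix is the off-diagonal part of `P`. -/
def supportGraph {n : ℕ} (P : Matrix (Fin n) (Fin n) ℝ) (hP : P.IsSymm) :
    SimpleGraph (Fin n) where
  Adj i j := i ≠ j ∧ P i j ≠ 0
  symm := ⟨fun i j h => ⟨h.1.symm, by rw [hP.apply]; exact h.2⟩⟩
  loopless := ⟨fun _ h => h.1 rfl⟩

/-- On a connected component the alternating vectors are all proportional. -/
lemma IsAlternating.mul_eq_mul {n : ℕ} {P : Matrix (Fin n) (Fin n) ℝ} {hP : P.IsSymm}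
    {x y : Fin n → ℝ} (hx : IsAlternating P x) (hy : IsAlternating P y) {i j : Fin n}
    (h : (supportGraph P hP).Reachable i j) : x i * y j = x j * y i := by
  obtain ⟨p⟩ := h
  induction p with
  | nil => rfl
  | cons h _ ih =>
    rw [hx.1 _ _ h.1 h.2, hy.1 _ _ h.1 h.2]
    linarith

lemma IsAlternating.sq_eq_sq {n : ℕ} {P : Matrix (Fin n) (Fin n) ℝ} {hP : P.IsSymm}
    {x : Fin n → ℝ} (hx : IsAlternating P x) {i j : Fin n}
    (h : (supportGraph P hP).Reachable i j) : x i ^ 2 = x j ^ 2 := by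
  obtain ⟨p⟩ := h
  induction p with
  | nil => rfl
  | cons h _ ih =>
    rw [hx.1 _ _ h.1 h.2, ← ih]
    ring

/-- There is an alternating vector of signs whose support is largest possible: it is `±1` on
the components that are bipartite without excess, and `0` on the other ones. -/
lemma exists_sign_vector {n : ℕ} (P : Matrix (Fin n) (Fin n) ℝ) (hP : P.IsSymm) :
    ∃ ε : Fin n → ℤ, (∀ i, ε i = 0 ∨ ε i = 1 ∨ ε i = -1) ∧
      IsAlternating P (fun i => (ε i : ℝ)) ∧
      ∀ x, IsAlternating P x → ∀ i, ε i = 0 → x i = 0 := by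
  let C := (supportGraph P hP).connectedComponentMk
  have key : ∀ c, ∃ x, IsAlternating P x ∧
      ∀ y, IsAlternating P y → ∀ i, C i = c → x i = 0 → y i = 0 := by
    intro c
    by_cases h : ∃ x, IsAlternating P x ∧ ∃ i, C i = c ∧ x i ≠ 0
    · obtain ⟨x, hx, k, hk, hxk⟩ := h
      refine ⟨x, hx, fun y _ i hi h0 => ?_⟩
      have := hx.sq_eq_sq (SimpleGraph.ConnectedComponent.exact (hi.trans hk.symm))
      rw [h0] at this
      exact absurd (pow_eq_zero_iff two_ne_zero |>.1 (by linarith : x k ^ 2 = 0)) hxk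
    · push Not at h
      exact ⟨0, ⟨fun _ _ _ _ => by simp, fun _ _ => rfl⟩, fun y hy i hi _ => h y hy i hi⟩
  choose x hx hx0 using key
  refine ⟨fun i => SignType.sign (x (C i) i), fun i => ?_, ⟨fun i j hij h => ?_, fun i h => ?_⟩,
    fun y hy i h0 => ?_⟩
  · rcases lt_trichotomy (x (C i) i) 0 with h | h | h
    · simp [sign_neg h]
    · simp [h]
    · simp [sign_pos h]
  · have hC : C i = C j := SimpleGraph.ConnectedComponent.sound
      (SimpleGraph.Adj.reachable (G := supportGraph P hP) ⟨hij, h⟩)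
    simp only
    rw [hC, (hx (C j)).1 i j hij h, Left.sign_neg]
    cases SignType.sign (x (C j) j) <;> simp
  · simp [(hx (C i)).2 i h]
  · refine hx0 (C i) y hy i rfl ?_
    rcases lt_trichotomy (x (C i) i) 0 with h | h | h
    · simp [sign_neg h] at h0
    · exact h
    · simp [sign_pos h] at h0

/-- The orthogonal projection `Q` onto the kernel of `P`, together with `w = Q 𝟙`. The last
clause is the row sum estimate: in row `i` the entries of `Q` live on the component of `i`, where
they have the signs of `w i * w j`, so there the correction `κ w i w j` is subtracted in absolute
value, while it is added off that component. The `2` comes from integrality: the signs on the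
component of `i` have an integer sum, which is nonzero if `w i ≠ 0`. -/
lemma exists_projection {n : ℕ} {P : Matrix (Fin n) (Fin n) ℝ} (hP : P.IsSymm)
    (hP01 : ∀ i j, i ≠ j → P i j = 0 ∨ P i j = 1)
    (hΔ : ∀ i, 0 ≤ P i i - ∑ j ∈ Finset.univ.erase i, P i j) :
    ∃ (Q : Matrix (Fin n) (Fin n) ℝ) (w : Fin n → ℝ), Q.IsSymm ∧ P * Q = 0 ∧
      (∀ x, P *ᵥ x = 0 → Q *ᵥ x = x) ∧ w = Q *ᵥ 1 ∧ (∀ i, |w i| ≤ 1) ∧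
      ∀ κ, 0 ≤ κ → κ * ∑ j, w j ^ 2 ≤ 1 → ∀ i,
        ∑ j, |Q i j - κ * (w i * w j)| ≤ 1 + κ * (|w i| * ((∑ j, |w j|) - 2)) := by
  classical
  obtain ⟨ε, hε, hεa, hεmax⟩ := exists_sign_vector P hP
  let C := (supportGraph P hP).connectedComponentMk
  let F : (supportGraph P hP).ConnectedComponent → Finset (Fin n) :=
    fun c => Finset.univ.filter fun j => C j = c
  let m : (supportGraph P hP).ConnectedComponent → ℝ := fun c => ((F c).card : ℝ)
  let d : (supportGraph P hP).ConnectedComponent → ℤ := fun c => ∑ j ∈ F c, ε j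
  have hm : ∀ i, 0 < m (C i) := fun i => by
    have : 0 < (F (C i)).card := Finset.card_pos.2 ⟨i, by simp [F]⟩
    exact Nat.cast_pos.2 this
  have hεsq : ∀ i j, C i = C j → (ε i : ℝ) ^ 2 = (ε j : ℝ) ^ 2 := fun i j h =>
    hεa.sq_eq_sq (SimpleGraph.ConnectedComponent.exact h)
  have hε1 : ∀ i, ε i ≠ 0 → (ε i : ℝ) ^ 2 = 1 := fun i h => by
    rcases hε i with h' | h' | h'
    · exact absurd h' h
    · rw [h']; norm_num
    · rw [h']; norm_num
  have hεabs : ∀ i, |(ε i : ℝ)| ≤ 1 := fun i => by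
    rcases hε i with h' | h' | h' <;> rw [h'] <;> norm_num
  let Q : Matrix (Fin n) (Fin n) ℝ := Matrix.of fun i j =>
    if C j = C i then (ε i : ℝ) * ε j / m (C i) else 0
  have hQx : ∀ x i, (Q *ᵥ x) i = ∑ j ∈ F (C i), (ε i : ℝ) * ε j / m (C i) * x j := by
    intro x i
    simp only [Matrix.mulVec, dotProduct, Q, Matrix.of_apply, ite_mul, zero_mul, F,
      Finset.sum_filter]
  have hw : ∀ i, (Q *ᵥ 1) i = ε i * d (C i) / m (C i) := by
    intro i
    rw [hQx]
    simp only [Pi.one_apply, mul_one, d, Int.cast_sum, Finset.mul_sum, Finset.sum_div]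
  have hdabs : ∀ c, |(d c : ℝ)| ≤ m c := by
    intro c
    simp only [d, Int.cast_sum, m]
    refine (Finset.abs_sum_le_sum_abs _ _).trans ?_
    refine (Finset.sum_le_sum fun j _ => hεabs j).trans ?_
    simp
  refine ⟨Q, Q *ᵥ 1, ?_, ?_, ?_, rfl, ?_, ?_⟩
  · ext i j
    simp only [Matrix.transpose_apply, Q, Matrix.of_apply]
    by_cases h : C j = C i
    · rw [if_pos h, if_pos h.symm, h, mul_comm]
    · rw [if_neg h, if_neg (Ne.symm h)]
  · ext i k
    -- each column of `Q` is alternating, as it is a multiple of `ε` on one component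
    have : P *ᵥ (fun j => Q j k) = 0 := by
      rw [mulVec_eq_zero_iff_isAlternating hP hP01 hΔ]
      refine ⟨fun i j hij h => ?_, fun i h => ?_⟩
      · have hC : C i = C j := SimpleGraph.ConnectedComponent.sound
          (SimpleGraph.Adj.reachable (G := supportGraph P hP) ⟨hij, h⟩)
        have h' : (ε i : ℝ) = -ε j := hεa.1 i j hij h
        simp only [Q, Matrix.of_apply, hC, h']
        split_ifs <;> ring
      · have h' : (ε i : ℝ) = 0 := hεa.2 i h
        simp [Q, h']
    exact congrFun this i
  · intro x hx
    rw [mulVec_eq_zero_iff_isAlternating hP hP01 hΔ] at hx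
    ext i
    rw [hQx]
    by_cases h0 : ε i = 0
    · rw [hεmax x hx i h0]
      simp [h0]
    · have : ∀ j ∈ F (C i), (ε i : ℝ) * ε j / m (C i) * x j = x i / m (C i) := by
        intro j hj
        have hC : C j = C i := by simpa [F] using hj
        have h1 := hx.mul_eq_mul hεa (SimpleGraph.ConnectedComponent.exact hC)
        have h2 := (hεsq j i hC).trans (hε1 i h0)
        have : (ε i : ℝ) * ε j * x j = x i := by
          linear_combination (ε j : ℝ) * h1 + x i * h2
        rw [← this]; ring
      rw [Finset.sum_congr rfl this, Finset.sum_const, nsmul_eq_mul]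
      exact mul_div_cancel₀ _ (hm i).ne'
  · intro i
    rw [hw, abs_div, abs_mul, abs_of_pos (hm i), div_le_one (hm i)]
    calc |(ε i : ℝ)| * |(d (C i) : ℝ)| ≤ 1 * m (C i) :=
          mul_le_mul (hεabs i) (hdabs _) (abs_nonneg _) zero_le_one
      _ = m (C i) := one_mul _
  · intro κ hκ hκT i
    set w := Q *ᵥ 1 with hwdef
    by_cases h0 : ε i = 0
    · have hwi : w i = 0 := by rw [hw, h0]; simp
      rw [hwi]
      simp [Q, h0]
    · have hmi := hm i
      have hwabs : ∀ j ∈ F (C i), |w j| = |(d (C i) : ℝ)| / m (C i) := by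
        intro j hj
        have hC : C j = C i := by simpa [F] using hj
        have h2 : |(ε j : ℝ)| = 1 := by
          rw [← sq_eq_sq₀ (abs_nonneg _) zero_le_one, sq_abs, hεsq j i hC, hε1 i h0, one_pow]
        rw [hw, hC, abs_div, abs_mul, h2, one_mul, abs_of_pos hmi]
      have hsumF : ∑ j ∈ F (C i), |w j| = |(d (C i) : ℝ)| := by
        rw [Finset.sum_congr rfl hwabs, Finset.sum_const, nsmul_eq_mul]
        exact mul_div_cancel₀ _ hmi.ne'
      have hsq : (d (C i) : ℝ) ^ 2 / m (C i) ≤ ∑ j, w j ^ 2 := by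
        have : ∑ j ∈ F (C i), w j ^ 2 = (d (C i) : ℝ) ^ 2 / m (C i) := by
          have : ∀ j ∈ F (C i), w j ^ 2 = (|(d (C i) : ℝ)| / m (C i)) ^ 2 := fun j hj => by
            rw [← hwabs j hj, sq_abs]
          rw [Finset.sum_congr rfl this, Finset.sum_const, nsmul_eq_mul, div_pow, sq_abs]
          change m (C i) * _ = _
          field_simp
        rw [← this]
        exact Finset.sum_le_sum_of_subset_of_nonneg (Finset.subset_univ _)
          fun _ _ _ => sq_nonneg _
      have hle : κ * ((d (C i) : ℝ) ^ 2 / m (C i)) ≤ 1 :=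
        (mul_le_mul_of_nonneg_left hsq hκ).trans hκT
      have hpt : ∀ j, |Q i j - κ * (w i * w j)| = κ * |w i| * |w j| +
          if C j = C i then 1 / m (C i) - 2 * κ * |w i| * |w j| else 0 := by
        intro j
        by_cases hC : C j = C i
        · have e : Q i j - κ * (w i * w j) =
              ((ε i : ℝ) * ε j) * ((1 - κ * ((d (C i) : ℝ) ^ 2 / m (C i))) / m (C i)) := by
            simp only [Q, Matrix.of_apply, hw, hC, if_true]
            field_simp
          have e2 : |(ε i : ℝ) * ε j| = 1 := by
            rw [← sq_eq_sq₀ (abs_nonneg _) zero_le_one, sq_abs, mul_pow, hεsq j i hC,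
              hε1 i h0]; norm_num
          rw [if_pos hC, e, abs_mul, e2, one_mul,
            abs_of_nonneg (div_nonneg (by linarith) hmi.le),
            hwabs i (by simp [F]), hwabs j (by simp [F, hC]), ← sq_abs (d (C i) : ℝ)]
          field_simp
          ring
        · simp only [Q, Matrix.of_apply, if_neg hC, zero_sub, abs_neg, abs_mul, abs_of_nonneg hκ]
          ring
      have hsum : ∑ j, |Q i j - κ * (w i * w j)| =
          κ * |w i| * ∑ j, |w j| + (1 - 2 * κ * |w i| * |(d (C i) : ℝ)|) := by
        rw [Finset.sum_congr rfl fun j _ => hpt j, Finset.sum_add_distrib, ← Finset.mul_sum,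
          ← Finset.sum_filter]
        change _ + ∑ j ∈ F (C i), _ = _
        rw [Finset.sum_sub_distrib, ← Finset.mul_sum, hsumF, Finset.sum_const, nsmul_eq_mul]
        change _ + (m (C i) * _ - _) = _
        rw [mul_one_div_cancel hmi.ne']
      have hint : |w i| ≤ |w i| * |(d (C i) : ℝ)| := by
        by_cases hd : d (C i) = 0
        · have : w i = 0 := by rw [hw, hd]; simp
          simp [this]
        · refine le_mul_of_one_le_right (abs_nonneg _) ?_
          exact_mod_cast Int.one_le_abs hd
      have := mul_le_mul_of_nonneg_left hint hκ
      rw [hsum]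
      linarith

/-! ### Convergence of the inverse -/

/-- The range of a symmetric matrix contains every vector orthogonal to its kernel. -/
lemma exists_mulVec_eq_of_orthogonal_ker {n : ℕ} {P : Matrix (Fin n) (Fin n) ℝ} (hP : P.IsSymm)
    (y : Fin n → ℝ) (hy : ∀ x, P *ᵥ x = 0 → x ⬝ᵥ y = 0) : ∃ z, P *ᵥ z = y := by
  have hs : (Matrix.toEuclideanLin P).IsSymmetric := by
    rw [Matrix.isSymmetric_toEuclideanLin_iff]
    rw [Matrix.IsHermitian, Matrix.conjTranspose_eq_transpose_of_trivial, hP.eq]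
  have h1 : (Matrix.toEuclideanLin P).range = ((Matrix.toEuclideanLin P).ker)ᗮ := by
    rw [← hs.orthogonal_range, Submodule.orthogonal_orthogonal]
  have h2 : WithLp.toLp 2 y ∈ (Matrix.toEuclideanLin P).range := by
    rw [h1, Submodule.mem_orthogonal]
    intro u hu
    have hu' : P *ᵥ u.ofLp = 0 := by
      have := congrArg WithLp.ofLp (LinearMap.mem_ker.1 hu)
      simpa using this
    have := hy _ hu'
    rw [EuclideanSpace.inner_eq_star_dotProduct]
    simpa [dotProduct_comm] using this
  obtain ⟨z, hz⟩ := h2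
  refine ⟨z.ofLp, ?_⟩
  have := congrArg WithLp.ofLp hz
  simpa using this

/-- A matrix with quadratic form at least `α |x|²` is invertible, and the entries of its inverse
are at most `1 / α` in absolute value. -/
lemma coercive_inverse {n : ℕ} {M : Matrix (Fin n) (Fin n) ℝ} {α : ℝ} (hα : 0 < α)
    (hM : ∀ x, α * ∑ i, x i ^ 2 ≤ x ⬝ᵥ M *ᵥ x) :
    IsUnit M.det ∧ ∀ i j, |M⁻¹ i j| ≤ 1 / α := by
  have hu : IsUnit M.det := by
    rw [isUnit_iff_ne_zero]
    intro h0
    obtain ⟨v, hv, hMv⟩ := Matrix.exists_mulVec_eq_zero_iff.2 h0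
    have := hM v
    rw [hMv, dotProduct_zero] at this
    have hs : 0 ≤ ∑ i, v i ^ 2 := Finset.sum_nonneg fun i _ => sq_nonneg _
    have hz : ∑ i, v i ^ 2 = 0 := by nlinarith
    rw [Finset.sum_eq_zero_iff_of_nonneg fun i _ => sq_nonneg _] at hz
    exact hv (funext fun i => pow_eq_zero_iff two_ne_zero |>.1 (hz i (Finset.mem_univ i)))
  refine ⟨hu, fun i j => ?_⟩
  set y : Fin n → ℝ := fun k => M⁻¹ k j with hy
  have hMy : M *ᵥ y = Pi.single j 1 := by
    have e : y = M⁻¹ *ᵥ Pi.single j 1 := by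
      ext k; simp [hy]
    rw [e, Matrix.mulVec_mulVec, Matrix.mul_nonsing_inv _ hu, Matrix.one_mulVec]
  have h := hM y
  rw [hMy, dotProduct_single, mul_one] at h
  have hk : ∀ k, α * y k ^ 2 ≤ y j := fun k => by
    refine le_trans (mul_le_mul_of_nonneg_left ?_ hα.le) h
    exact Finset.single_le_sum (f := fun k => y k ^ 2) (fun i _ => sq_nonneg _)
      (Finset.mem_univ k)
  have hj : α * y j ≤ 1 := by
    by_contra hc
    push Not at hc
    have := hk j
    have hp : 0 < y j := by
      by_contra h'; push Not at h'; nlinarith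
    nlinarith
  change |y i| ≤ 1 / α
  refine abs_le_of_sq_le_sq ?_ (by positivity)
  have hyj : y j ≤ 1 / α := by rw [le_div_iff₀ hα]; linarith
  have : y i ^ 2 ≤ y j / α := by rw [le_div_iff₀ hα]; linarith [hk i]
  calc y i ^ 2 ≤ y j / α := this
    _ ≤ (1 / α) / α := by gcongr
    _ = (1 / α) ^ 2 := by field_simp

/-- The inverse of `S + tP` converges to any `N` that inverts `S` on the kernel of `P`, in the
sense that `PN = 0` and `1 - SN = PR` for some `R`: indeed
`(S + tP)⁻¹ - N = (S + tP)⁻¹ P R = t⁻¹ (R - (S + tP)⁻¹ S R)`. -/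
lemma tendsto_inverse {n : ℕ} {S P N R : Matrix (Fin n) (Fin n) ℝ} {α : ℝ} (hα : 0 < α)
    (hS : ∀ x, α * ∑ i, x i ^ 2 ≤ x ⬝ᵥ S *ᵥ x) (hP : ∀ x, 0 ≤ x ⬝ᵥ P *ᵥ x)
    (hPN : P * N = 0) (hR : 1 - S * N = P * R) :
    Filter.Tendsto (fun t : ℝ => (S + t • P)⁻¹) Filter.atTop (nhds N) := by
  have hM : ∀ t : ℝ, 0 < t → IsUnit (S + t • P).det ∧ ∀ i j, |(S + t • P)⁻¹ i j| ≤ 1 / α := by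
    intro t ht
    refine coercive_inverse hα fun x => ?_
    rw [Matrix.add_mulVec, dotProduct_add, Matrix.smul_mulVec, dotProduct_smul, smul_eq_mul]
    have := mul_nonneg ht.le (hP x)
    linarith [hS x]
  have hid : ∀ t : ℝ, 0 < t →
      (S + t • P)⁻¹ = N + t⁻¹ • (R - (S + t • P)⁻¹ * (S * R)) := by
    intro t ht
    obtain ⟨hu, -⟩ := hM t ht
    have e1 : (S + t • P) * (N + t⁻¹ • R) = 1 + t⁻¹ • (S * R) := by
      have h1 : S * N + P * R = 1 := by rw [← hR]; abel
      rw [Matrix.add_mul, Matrix.mul_add, Matrix.mul_add, Matrix.smul_mul, hPN,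
        Matrix.mul_smul, Matrix.smul_mul, Matrix.mul_smul, smul_smul, mul_inv_cancel₀ ht.ne',
        one_smul, smul_zero, zero_add, ← h1]
      abel
    have e2 := congrArg (fun X => (S + t • P)⁻¹ * X) e1
    rw [← Matrix.mul_assoc, Matrix.nonsing_inv_mul _ hu, Matrix.one_mul, Matrix.mul_add,
      Matrix.mul_one, Matrix.mul_smul] at e2
    rw [smul_sub, add_sub, e2]
    abel
  refine tendsto_pi_nhds.2 fun i => tendsto_pi_nhds.2 fun j => ?_
  have hb : ∀ t : ℝ, 0 < t → |(S + t • P)⁻¹ i j - N i j|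
      ≤ t⁻¹ * (|R i j| + ∑ k, 1 / α * |(S * R) k j|) := by
    intro t ht
    have : (S + t • P)⁻¹ i j - N i j = t⁻¹ * (R i j - ∑ k, (S + t • P)⁻¹ i k * (S * R) k j) := by
      conv_lhs => rw [hid t ht]
      simp [Matrix.mul_apply]
    rw [this, abs_mul, abs_of_pos (inv_pos.2 ht)]
    refine mul_le_mul_of_nonneg_left ?_ (inv_pos.2 ht).le
    refine (abs_sub _ _).trans (add_le_add le_rfl ?_)
    refine (Finset.abs_sum_le_sum_abs _ _).trans (Finset.sum_le_sum fun k _ => ?_)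
    rw [abs_mul]
    exact mul_le_mul_of_nonneg_right ((hM t ht).2 i k) (abs_nonneg _)
  rw [tendsto_iff_norm_sub_tendsto_zero]
  refine squeeze_zero' (Filter.Eventually.of_forall fun t => norm_nonneg _)
    ((Filter.eventually_gt_atTop 0).mono fun t ht => hb t ht) ?_
  simpa using (tendsto_inv_atTop_zero (𝕜 := ℝ)).mul_const
    (|R i j| + ∑ k, 1 / α * |(S * R) k j|)

/-! ### Norm estimates -/

/-- The scalar inequality behind the row sum bound. In the extreme case
`α = (n - 2)ℓ`, `r = 1`, `T = s² / n` it reads `(s - 2)(2n - 2) < (n - 2)(n - 2 + s² / n)`, whose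
two sides differ by `(n - s)(n² - (n - 2)s) / n`. -/
lemma scalar_bound {n ℓ α r s T : ℝ} (hn : 3 ≤ n) (hℓ : 0 < ℓ) (hα : (n - 2) * ℓ ≤ α)
    (hr0 : 0 ≤ r) (hr1 : r ≤ 1) (hT : s ^ 2 ≤ n * T) (hs : s < n) :
    ℓ / (α + ℓ * T) * (r * (s - 2)) < ℓ * (n - 2) / (α + ℓ * n) := by
  have hα0 : 0 < α := lt_of_lt_of_le (mul_pos (by linarith) hℓ) hα
  have hn0 : 0 < n := by linarith
  have hT0 : 0 ≤ T := by
    by_contra h; push Not at h; nlinarith [sq_nonneg s]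
  have hd1 : 0 < α + ℓ * T := by positivity
  have hd2 : 0 < α + ℓ * n := by positivity
  rw [div_mul_eq_mul_div, div_lt_div_iff₀ hd1 hd2]
  suffices h : (r * (s - 2)) * (α + ℓ * n) < (n - 2) * (α + ℓ * T) by nlinarith
  by_cases hs2 : s ≤ 2
  · have h1 : (r * (s - 2)) * (α + ℓ * n) ≤ 0 :=
      mul_nonpos_of_nonpos_of_nonneg (mul_nonpos_of_nonneg_of_nonpos hr0 (by linarith)) hd2.le
    have h2 : 0 < (n - 2) * (α + ℓ * T) := mul_pos (by linarith) hd1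
    linarith
  · push Not at hs2
    have h1 : (r * (s - 2)) * (α + ℓ * n) ≤ (s - 2) * (α + ℓ * n) :=
      mul_le_mul_of_nonneg_right (by nlinarith) hd2.le
    have h2 : (n - s) * ((n - 2) * ℓ) ≤ (n - s) * α :=
      mul_le_mul_of_nonneg_left hα (by linarith)
    have h3 : (s - 2) * (2 * n - 2) < (n - 2) * (n - 2 + T) := by
      have h4 : n * ((s - 2) * (2 * n - 2)) < n * ((n - 2) * (n - 2 + T)) := by
        have h5 : (n - 2) * s ^ 2 ≤ (n - 2) * (n * T) :=
          mul_le_mul_of_nonneg_left hT (by linarith)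
        have h6 : 0 < (n - s) * (n ^ 2 - (n - 2) * s) := by
          refine mul_pos (by linarith) ?_
          nlinarith
        nlinarith
      exact lt_of_mul_lt_mul_left h4 hn0.le
    have h7 := mul_lt_mul_of_pos_left h3 hℓ
    nlinarith

lemma infNorm_le {n : ℕ} [Nonempty (Fin n)] {A : Matrix (Fin n) (Fin n) ℝ} {c : ℝ}
    (h : ∀ i, ∑ j, |A i j| ≤ c) : infNorm A ≤ c := ciSup_le h

lemma infNorm_lt {n : ℕ} [Nonempty (Fin n)] {A : Matrix (Fin n) (Fin n) ℝ} {c : ℝ}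
    (h : ∀ i, ∑ j, |A i j| < c) : infNorm A < c := by
  obtain ⟨i, hi⟩ := exists_eq_ciSup_of_finite (f := fun i => ∑ j, |A i j|)
  rw [infNorm, ← hi]
  exact h i

/-- The norm of the matrix `S⁻¹`, which is `α⁻¹ (1 - ℓ / (α + ℓ n) 𝟙 𝟙ᵀ)`. -/
lemma infNorm_inv {n : ℕ} (hn : 3 ≤ n) {ℓ α : ℝ} (hℓ : 0 < ℓ) (hα : 0 < α) :
    infNorm (α • (1 : Matrix (Fin n) (Fin n) ℝ) + ℓ • Matrix.of (fun _ _ => (1 : ℝ)))⁻¹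
      = 1 / α + ℓ * ((n : ℝ) - 2) / (α * (α + ℓ * n)) := by
  have hn0 : (3 : ℝ) ≤ n := by exact_mod_cast hn
  have : Nonempty (Fin n) := ⟨⟨0, by omega⟩⟩
  have hd : 0 < α + ℓ * n := by positivity
  have hinv : (α • (1 : Matrix (Fin n) (Fin n) ℝ) + ℓ • Matrix.of (fun _ _ => (1 : ℝ)))⁻¹
      = Matrix.of fun i j => 1 / α * ((if i = j then 1 else 0) - ℓ / (α + ℓ * n)) := by
    refine Matrix.inv_eq_right_inv ?_
    ext i j
    simp only [Matrix.mul_apply, Matrix.add_apply, Matrix.smul_apply, Matrix.of_apply,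
      Matrix.one_apply, smul_eq_mul, mul_one, add_mul, Finset.sum_add_distrib, mul_ite, mul_zero,
      ite_mul, zero_mul, Finset.sum_ite_eq, Finset.mem_univ, if_true]
    rw [← Finset.mul_sum, ← Finset.mul_sum, Finset.sum_sub_distrib]
    simp only [Finset.sum_ite_eq', Finset.mem_univ, if_true, Finset.sum_const, Finset.card_univ,
      Fintype.card_fin, nsmul_eq_mul]
    field_simp
    ring
  have hrow : ∀ i : Fin n, ∑ j, |(1 / α * ((if i = j then 1 else 0) - ℓ / (α + ℓ * n)) : ℝ)|
      = 1 / α + ℓ * ((n : ℝ) - 2) / (α * (α + ℓ * n)) := by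
    intro i
    have hκ0 : 0 ≤ ℓ / (α + ℓ * n) := by positivity
    have hκ1 : ℓ / (α + ℓ * n) ≤ 1 := by
      rw [div_le_one hd]; nlinarith
    have e : ∀ j, |(1 / α * ((if i = j then 1 else 0) - ℓ / (α + ℓ * n)) : ℝ)|
        = 1 / α * (ℓ / (α + ℓ * n) + if i = j then 1 - 2 * (ℓ / (α + ℓ * n)) else 0) := by
      intro j
      rw [abs_mul, abs_of_pos (by positivity : 0 < 1 / α)]
      congr 1
      split_ifs
      · rw [abs_of_nonneg (by linarith)]; ring
      · rw [zero_sub, abs_neg, abs_of_nonneg hκ0, add_zero]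
    rw [Finset.sum_congr rfl fun j _ => e j, ← Finset.mul_sum, Finset.sum_add_distrib]
    simp only [Finset.sum_ite_eq, Finset.mem_univ, if_true, Finset.sum_const, Finset.card_univ,
      Fintype.card_fin, nsmul_eq_mul]
    field_simp
    ring
  rw [hinv, infNorm]
  simp only [Matrix.of_apply, hrow, ciSup_const]

/-! ### The limit and its norm -/

theorem limit_inverse_signless_laplacian_norm
    (n : ℕ) (hn : 3 ≤ n) (ℓ α : ℝ) (hℓ : 0 < ℓ) (hα : ((n : ℝ) - 2) * ℓ ≤ α)
    (S : Matrix (Fin n) (Fin n) ℝ)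
    (hS : S = α • (1 : Matrix (Fin n) (Fin n) ℝ) +
      ℓ • Matrix.of (fun _ _ => (1 : ℝ)))
    (P : Matrix (Fin n) (Fin n) ℝ) (hPsym : P.IsSymm)
    (hP01 : ∀ i j, i ≠ j → P i j = 0 ∨ P i j = 1)
    (hPΔ : ∀ i, P i i - ∑ j ∈ Finset.univ.erase i, P i j = 0 ∨
      P i i - ∑ j ∈ Finset.univ.erase i, P i j = 2) :
    ∃ N : Matrix (Fin n) (Fin n) ℝ,
      Filter.Tendsto (fun t : ℝ => (S + t • P)⁻¹) Filter.atTop (nhds N) ∧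
      infNorm S⁻¹ = 1 / α + ℓ * ((n : ℝ) - 2) / (α * (α + ℓ * n)) ∧
      infNorm N ≤ infNorm S⁻¹ ∧
      (infNorm N = infNorm S⁻¹ ↔ P = 0) := by
  have hn3 : (3 : ℝ) ≤ n := by exact_mod_cast hn
  have : Nonempty (Fin n) := ⟨⟨0, by omega⟩⟩
  have hα0 : 0 < α := lt_of_lt_of_le (mul_pos (by linarith) hℓ) hα
  have hΔ : ∀ i, 0 ≤ P i i - ∑ j ∈ Finset.univ.erase i, P i j := fun i => by
    rcases hPΔ i with h | h <;> rw [h]; norm_num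
  obtain ⟨Q, w, hQsym, hPQ, hQker, hw, hw1, hrow⟩ := exists_projection hPsym hP01 hΔ
  have hPw : P *ᵥ w = 0 := by rw [hw, Matrix.mulVec_mulVec, hPQ, Matrix.zero_mulVec]
  have hQvec : ∀ x, x ᵥ* Q = Q *ᵥ x := fun x => by
    rw [← Matrix.mulVec_transpose, hQsym.eq]
  -- `Σ w = 𝟙ᵀ Q 𝟙 = 𝟙ᵀ Q² 𝟙 = wᵀ w`
  have hT : ∑ j, w j = ∑ j, w j ^ 2 := by
    have h1 : (1 : Fin n → ℝ) ⬝ᵥ Q *ᵥ w = w ⬝ᵥ w := by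
      rw [Matrix.dotProduct_mulVec, hQvec, ← hw]
    rw [hQker w hPw] at h1
    simpa [dotProduct, sq] using h1
  set T := ∑ j, w j ^ 2 with hTdef
  have hT0 : 0 ≤ T := Finset.sum_nonneg fun _ _ => sq_nonneg _
  have hd : 0 < α + ℓ * T := by positivity
  set κ := ℓ / (α + ℓ * T) with hκ
  have hκ0 : 0 ≤ κ := by positivity
  have hκT : κ * T ≤ 1 := by
    rw [hκ, div_mul_eq_mul_div, div_le_one hd]; linarith
  let N : Matrix (Fin n) (Fin n) ℝ := (1 / α) • (Q - κ • Matrix.vecMulVec w w)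
  have hSx : ∀ x, S *ᵥ x = α • x + (ℓ * ∑ i, x i) • (1 : Fin n → ℝ) := by
    intro x
    rw [hS, Matrix.add_mulVec, Matrix.smul_mulVec, Matrix.one_mulVec, Matrix.smul_mulVec]
    ext i
    simp [Matrix.mulVec, dotProduct]
  have hSpos : ∀ x, α * ∑ i, x i ^ 2 ≤ x ⬝ᵥ S *ᵥ x := by
    intro x
    rw [hSx, dotProduct_add, dotProduct_smul, dotProduct_smul]
    have e1 : x ⬝ᵥ x = ∑ i, x i ^ 2 := by simp [dotProduct, sq]
    have e2 : x ⬝ᵥ (1 : Fin n → ℝ) = ∑ i, x i := by simp [dotProduct]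
    rw [e1, e2, smul_eq_mul, smul_eq_mul]
    nlinarith [sq_nonneg (∑ i, x i)]
  have hPN : P * N = 0 := by
    simp only [N, Matrix.mul_smul, Matrix.mul_sub, hPQ, Matrix.mul_vecMulVec, hPw]
    simp
  have hSsym : S.IsSymm := by
    rw [hS]
    ext i j
    simp [Matrix.one_apply, eq_comm]
  have hker : ∀ x, P *ᵥ x = 0 → x ᵥ* (1 - S * N) = 0 := by
    intro x hx
    have a1 : x ⬝ᵥ w = ∑ i, x i := by
      rw [hw, Matrix.dotProduct_mulVec, hQvec, hQker x hx]
      simp [dotProduct]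
    have a2 : (1 : Fin n → ℝ) ⬝ᵥ w = T := by
      rw [← hT]; simp [dotProduct]
    have hNv : ∀ v, v ᵥ* N = (1 / α) • (Q *ᵥ v - (κ * (v ⬝ᵥ w)) • w) := by
      intro v
      simp only [N, Matrix.vecMul_smul, Matrix.vecMul_sub, hQvec, Matrix.vecMul_vecMulVec,
        smul_smul]
    have hSv : x ᵥ* S = S *ᵥ x := by rw [← Matrix.mulVec_transpose, hSsym.eq]
    rw [Matrix.vecMul_sub, Matrix.vecMul_one, ← Matrix.vecMul_vecMul, hSv, hSx,
      Matrix.add_vecMul, Matrix.smul_vecMul, Matrix.smul_vecMul, hNv, hNv, a1, a2, hQker x hx,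
      ← hw]
    ext i
    simp only [Pi.sub_apply, Pi.add_apply, Pi.smul_apply, smul_eq_mul, Pi.zero_apply, hκ]
    field_simp
    ring
  have hR : ∃ R, 1 - S * N = P * R := by
    have : ∀ j, ∃ z, P *ᵥ z = fun i => (1 - S * N) i j := fun j =>
      exists_mulVec_eq_of_orthogonal_ker hPsym _ fun x hx => congrFun (hker x hx) j
    choose z hz using this
    refine ⟨Matrix.of fun i j => z j i, ?_⟩
    ext i j
    exact (congrFun (hz j) i).symm
  obtain ⟨R, hR⟩ := hR
  have htend := tendsto_inverse hα0 hSpos (quadratic_form_nonneg hPsym hP01 hΔ) hPN hR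
  have hnorm : infNorm S⁻¹ = 1 / α + ℓ * ((n : ℝ) - 2) / (α * (α + ℓ * n)) := by
    rw [hS]; exact infNorm_inv hn hℓ hα0
  have hzero : P = 0 → infNorm N = infNorm S⁻¹ := by
    intro h
    subst h
    have h2 : Filter.Tendsto (fun t : ℝ => (S + t • (0 : Matrix (Fin n) (Fin n) ℝ))⁻¹)
        Filter.atTop (nhds S⁻¹) := by
      simp only [smul_zero, add_zero]
      exact tendsto_const_nhds
    rw [tendsto_nhds_unique htend h2]
  have hlt : P ≠ 0 → infNorm N < infNorm S⁻¹ := by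
    intro hP
    set s := ∑ j, |w j| with hs
    have hcs : s ^ 2 ≤ n * T := by
      have := sq_sum_le_card_mul_sum_sq (s := Finset.univ) (f := fun j => |w j|)
      simpa [sq_abs] using this
    have hsn : s < n := by
      by_contra hc
      push Not at hc
      -- then `Σ w = T ≥ n` with all `w i ≤ 1`, so `w = 𝟙` is in the kernel of `P ≥ 0`
      have hTn : (n : ℝ) ≤ T := by nlinarith
      have hw1' : ∀ i, w i = 1 := by
        have hz : ∑ i, (1 - w i) = 0 := by
          have hnn : 0 ≤ ∑ i, (1 - w i) :=
            Finset.sum_nonneg fun i _ => by linarith [(abs_le.1 (hw1 i)).2]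
          have : ∑ i, (1 - w i) = n - T := by
            rw [Finset.sum_sub_distrib, hT]; simp
          linarith
        rw [Finset.sum_eq_zero_iff_of_nonneg fun i _ => by
          linarith [(abs_le.1 (hw1 i)).2]] at hz
        intro i
        linarith [hz i (Finset.mem_univ i)]
      have halt := (mulVec_eq_zero_iff_isAlternating hPsym hP01 hΔ w).1 hPw
      have hoff : ∀ i j, i ≠ j → P i j = 0 := fun i j hij => by
        by_contra h
        have := halt.1 i j hij h
        rw [hw1', hw1'] at this
        norm_num at this
      refine hP ?_
      ext i j
      by_cases hij : i = j
      · subst hij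
        have h0 : ∑ j ∈ Finset.univ.erase i, P i j = 0 :=
          Finset.sum_eq_zero fun j hj => hoff i j (Finset.ne_of_mem_erase hj).symm
        by_contra h
        have := halt.2 i (by rw [h0, sub_zero]; exact h)
        rw [hw1'] at this
        norm_num at this
      · exact hoff i j hij
    refine infNorm_lt fun i => ?_
    have e : ∑ j, |N i j| = 1 / α * ∑ j, |Q i j - κ * (w i * w j)| := by
      rw [Finset.mul_sum]
      refine Finset.sum_congr rfl fun j _ => ?_
      have hN : N i j = 1 / α * (Q i j - κ * (w i * w j)) := by
        simp [N, Matrix.vecMulVec_apply]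
      rw [hN, abs_mul, abs_of_pos (by positivity : 0 < 1 / α)]
    rw [e, hnorm]
    have h1 := hrow κ hκ0 hκT i
    have h2 := scalar_bound hn3 hℓ hα (abs_nonneg (w i)) (hw1 i) hcs hsn
    calc 1 / α * ∑ j, |Q i j - κ * (w i * w j)|
        < 1 / α * (1 + ℓ * ((n : ℝ) - 2) / (α + ℓ * n)) :=
          mul_lt_mul_of_pos_left (lt_of_le_of_lt h1 (by linarith)) (by positivity)
      _ = _ := by field_simp
  refine ⟨N, htend, hnorm, ?_, ?_, hzero⟩
  · by_cases h : P = 0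
    · exact (hzero h).le
    · exact (hlt h).le
  · intro h
    by_contra h'
    exact (hlt h').ne h
end
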